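/- arXiv:1403.3866 — 5 statements merged into one kernel-verified Lean document; each statement's English description precedes it below -/
import Mathlib

section
/- The characteristic polynomial of T is det(λ·Id − T) = λ^n + σ_2·λ^{n−2} + σ_4·λ^{n−4} + ⋯ + σ_{2k}·λ^{n−2k} + ⋯, i.e. det(λ·Id − T) = Σ_{k=0}^{⌊n/2⌋} σ_{2k}·λ^{n−2k}, where σ_0 = 1; in particular no odd elementary symmetric polynomial occurs as a coefficient. -/
open MvPolynomial

/-- The `n × n` matrix `T` over `ℂ[x_1, …, x_n]` with `T i i = 0`,
`T i j = x_j` for `i < j` and `T i j = -x_j` for `i > j`. -/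
noncomputable def Tmat (n : ℕ) : Matrix (Fin n) (Fin n) (MvPolynomial (Fin n) ℂ) :=
  fun i j => if i = j then 0 else if i < j then X j else -X j

/-! A rank-one perturbation changes a determinant affinely, so `det M` is the mean of
`det (M + 1 vᵀ)` and `det (M - 1 vᵀ)`. For `M = λ - T` and `v = x` both perturbed matrices are
triangular, with diagonal entries `λ + x_i` and `λ - x_i` respectively. Hence `2 det (λ - T)` is
`∏ (λ + x_i) + ∏ (λ - x_i)`, in which the odd elementary symmetric polynomials cancel. The factor
`2` is cancelled over `ℤ[x_i]`, whence the formula specializes to every commutative ring. -/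

open Matrix

section Determinant

variable {m R : Type*} [Fintype m] [DecidableEq m] [CommRing R]

lemma det_add_vecMulVec_add_det_sub_vecMulVec (M : Matrix m m R) (u v : m → R) :
    (M + vecMulVec u v).det + (M - vecMulVec u v).det = 2 * M.det := by
  -- The last row of the bordered matrix is affine in `w`, and its Schur complement is `M - u wᵀ`.
  let bordered (w : m → R) : Matrix (m ⊕ Unit) (m ⊕ Unit) R :=
    fromBlocks M (replicateCol Unit u) (replicateRow Unit w) 1
  have det_bordered (w : m → R) : (bordered w).det = (M - vecMulVec u w).det := by
    rw [det_fromBlocks_one₂₂, vecMulVec_eq Unit]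
  have bordered_eq (w : m → R) :
      bordered w = (bordered 0).updateRow (Sum.inr ()) (Sum.elim w 1) := by
    ext (i | i) (j | j) <;> simp [bordered, updateRow_apply]
  have last_row :
      Sum.elim (-v) 1 + Sum.elim v 1 = (2 : R) • Sum.elim (0 : m → R) (1 : Unit → R) := by
    ext (i | i) <;> simp [one_add_one_eq_two]
  calc (M + vecMulVec u v).det + (M - vecMulVec u v).det
      = (bordered (-v)).det + (bordered v).det := by
        rw [det_bordered, det_bordered, vecMulVec_neg, sub_neg_eq_add]
    _ = 2 * (bordered 0).det := by
        rw [bordered_eq (-v), bordered_eq v, ← det_updateRow_add, last_row, det_updateRow_smul,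
          ← bordered_eq]
    _ = 2 * M.det := by rw [det_bordered, vecMulVec_zero, sub_zero]

end Determinant

lemma filter_even_range_succ (n : ℕ) :
    {j ∈ Finset.range (n + 1) | Even j} = (Finset.range (n / 2 + 1)).image (2 * ·) := by
  ext j
  simp only [Finset.mem_filter, Finset.mem_range, Finset.mem_image, even_iff_exists_two_mul]
  constructor
  · rintro ⟨hj, k, rfl⟩
    exact ⟨k, by omega, rfl⟩
  · rintro ⟨k, hk, rfl⟩
    exact ⟨by omega, k, rfl⟩

lemma sum_range_add_sum_range_neg_one_pow_mul {R : Type*} [Ring R] (n : ℕ) (f : ℕ → R) :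
    ∑ j ∈ Finset.range (n + 1), f j + ∑ j ∈ Finset.range (n + 1), (-1) ^ j * f j =
      2 * ∑ k ∈ Finset.range (n / 2 + 1), f (2 * k) := by
  have add_signed (j : ℕ) : f j + (-1) ^ j * f j = if Even j then 2 * f j else 0 := by
    split_ifs with hj
    · rw [hj.neg_one_pow, one_mul, two_mul]
    · rw [(Nat.not_even_iff_odd.mp hj).neg_one_pow, neg_one_mul, add_neg_cancel]
  rw [← Finset.sum_add_distrib, Finset.sum_congr rfl fun j _ ↦ add_signed j, ← Finset.sum_filter,
    filter_even_range_succ, Finset.sum_image (by simp), Finset.mul_sum]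

lemma prod_X_add_C_add_prod_X_sub_C {R : Type*} [CommRing R] (s : Multiset R) :
    (s.map fun r ↦ Polynomial.X + Polynomial.C r).prod +
        (s.map fun r ↦ Polynomial.X - Polynomial.C r).prod =
      2 * ∑ k ∈ Finset.range (s.card / 2 + 1),
        Polynomial.C (s.esymm (2 * k)) * Polynomial.X ^ (s.card - 2 * k) := by
  rw [s.prod_X_add_C_eq_sum_esymm, s.prod_X_sub_X_eq_sum_esymm]
  exact sum_range_add_sum_range_neg_one_pow_mul s.card
    fun j ↦ Polynomial.C (s.esymm j) * Polynomial.X ^ (s.card - j)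

section SignedColumns

variable {ι R : Type*} [LinearOrder ι]

/-- The matrix `T` with arbitrary values `v j` in place of the variables `x_j` and an arbitrary
linear order as index set: column `j` is `v j` above the diagonal, `0` on it and `-v j` below. -/
def signedColumns [Zero R] [Neg R] (v : ι → R) : Matrix ι ι R :=
  Matrix.of fun i j ↦ if i = j then 0 else if i < j then v j else -v j

lemma map_signedColumns {S : Type*} [Ring R] [Ring S] (f : R →+* S) (v : ι → R) :
    (signedColumns v).map f = signedColumns (f ∘ v) := by
  ext i j
  simp [signedColumns, apply_ite f]

variable [Fintype ι] [CommRing R]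

lemma det_diagonal_sub_signedColumns_add_vecMulVec (d v : ι → R) :
    (diagonal d - signedColumns v + vecMulVec 1 v).det = ∏ i, (d i + v i) := by
  rw [det_of_isLowerTriangular]
  · simp [signedColumns]
  · intro i j (hij : i < j)
    simp [signedColumns, hij, hij.ne]

lemma det_diagonal_sub_signedColumns_sub_vecMulVec (d v : ι → R) :
    (diagonal d - signedColumns v - vecMulVec 1 v).det = ∏ i, (d i - v i) := by
  rw [det_of_isUpperTriangular]
  · simp [signedColumns]
  · intro i j (hij : j < i)
    simp [signedColumns, hij.not_gt, hij.ne']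

lemma two_mul_det_diagonal_sub_signedColumns (d v : ι → R) :
    2 * (diagonal d - signedColumns v).det = ∏ i, (d i + v i) + ∏ i, (d i - v i) := by
  rw [← det_add_vecMulVec_add_det_sub_vecMulVec _ 1 v, det_diagonal_sub_signedColumns_add_vecMulVec,
    det_diagonal_sub_signedColumns_sub_vecMulVec]

lemma charmatrix_signedColumns (v : ι → R) :
    (signedColumns v).charmatrix =
      diagonal (fun _ ↦ Polynomial.X) - signedColumns (Polynomial.C ∘ v) := by
  rw [← map_signedColumns]
  rfl

lemma two_mul_charpoly_signedColumns (v : ι → R) :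
    2 * (signedColumns v).charpoly =
      ∏ i, (Polynomial.X + Polynomial.C (v i)) + ∏ i, (Polynomial.X - Polynomial.C (v i)) := by
  rw [charpoly, charmatrix_signedColumns, two_mul_det_diagonal_sub_signedColumns]
  rfl

theorem charpoly_Tmat_general (v : ι → R) :
    (signedColumns v).charpoly =
      ∑ k ∈ Finset.range (Fintype.card ι / 2 + 1),
        Polynomial.C ((Finset.univ.val.map v).esymm (2 * k)) *
          Polynomial.X ^ (Fintype.card ι - 2 * k) := by
  let φ : MvPolynomial ι ℤ →+* R := (aeval v : MvPolynomial ι ℤ →ₐ[ℤ] R)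
  have φ_comp_X : φ ∘ X = v := funext fun i ↦ aeval_X v i
  have φ_esymm (k : ℕ) : φ (esymm ι ℤ k) = (Finset.univ.val.map v).esymm k :=
    aeval_esymm_eq_multiset_esymm ι ℤ k v
  have generic : (signedColumns (X : ι → MvPolynomial ι ℤ)).charpoly =
      ∑ k ∈ Finset.range (Fintype.card ι / 2 + 1),
        Polynomial.C (esymm ι ℤ (2 * k)) * Polynomial.X ^ (Fintype.card ι - 2 * k) := by
    refine mul_left_cancel₀ two_ne_zero ?_
    rw [two_mul_charpoly_signedColumns]
    simpa [esymm_eq_multiset_esymm] using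
      prod_X_add_C_add_prod_X_sub_C (Finset.univ.val.map (X : ι → MvPolynomial ι ℤ))
  rw [← φ_comp_X, ← map_signedColumns, charpoly_map, generic, φ_comp_X]
  simp [Polynomial.map_sum, φ_esymm]

end SignedColumns

lemma Tmat_eq_signedColumns (n : ℕ) : Tmat n = signedColumns X := rfl

/-- The characteristic polynomial of `T` is
`λ^n + σ_2 λ^{n-2} + σ_4 λ^{n-4} + ⋯`, where `σ_r` is the `r`-th elementary
symmetric polynomial in `x_1, …, x_n` (and `σ_0 = 1`). -/
theorem charpoly_Tmat (n : ℕ) (hn : 1 ≤ n) :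
    (Tmat n).charpoly =
      ∑ k ∈ Finset.range (n / 2 + 1),
        Polynomial.C (esymm (Fin n) ℂ (2 * k)) * Polynomial.X ^ (n - 2 * k) := by
  simpa only [Tmat_eq_signedColumns, esymm_eq_multiset_esymm, Fintype.card_fin] using
    charpoly_Tmat_general (X : Fin n → MvPolynomial (Fin n) ℂ)
end

section
/- Let v = (1, 1, …, 1) ∈ R^n. Then the n vectors v, T·v, T^2·v, …, T^{n−1}·v in the free module R^n are linearly independent over R. (This is the matrix form of the statement that the odd elements φ_0, …, φ_{n−1} of the Clifford algebra U(𝔥), where φ_0 = ξ_1 + ⋯ + ξ_n and φ_k = T^k(φ_0), are linearly independent over U(𝔥_{0̄}) = ℂ[x_1, …, x_n].) -/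
open MvPolynomial

/-!
By the Hautus test, over an algebraically closed field the vectors `v, Tv, …, T^{n-1}v` are
independent as soon as no left eigenvector of `T` is orthogonal to `v`. Suppose `w T = c w` and
`∑ w_i = 0` with `w ≠ 0`, and let `j` and `k` be the first and the last index of a nonzero entry
of `w`. Reading the eigenvector equation at `j` and at `k` gives `c = x_j` and `c = -x_k`. As a
single nonzero entry cannot sum to zero, `j < k`; hence the vectors are independent unless
`x_j + x_k = 0` for some `j < k`.
-/

open Matrix Module Submodule

section Hautus

theorem pow_apply_mem_span_range_pow_lt_finrank {R M : Type*} [CommRing R] [Nontrivial R]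
    [AddCommGroup M] [Module R M] [Module.Free R M] [Module.Finite R M] (f : End R M) (v : M)
    (k : ℕ) : (f ^ k) v ∈ span R (Set.range fun i : Fin (finrank R M) => (f ^ (i : ℕ)) v) := by
  rw [f.pow_eq_aeval_mod_charpoly, Polynomial.aeval_eq_sum_range, LinearMap.sum_apply]
  refine sum_mem fun i _ => ?_
  rw [LinearMap.smul_apply]
  by_cases hi : i < finrank R M
  · exact smul_mem _ _ (subset_span ⟨⟨i, hi⟩, rfl⟩)
  · have hdeg : (Polynomial.X ^ k %ₘ f.charpoly).degree < i :=
      (Polynomial.degree_modByMonic_lt _ f.charpoly_monic).trans_le <| by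
        rw [Polynomial.degree_eq_natDegree f.charpoly_monic.ne_zero, f.charpoly_natDegree]
        exact_mod_cast not_lt.mp hi
    rw [Polynomial.coeff_eq_zero_of_degree_lt hdeg, zero_smul]
    exact zero_mem _

theorem dualAnnihilator_mem_invtSubmodule_dualMap {R M : Type*} [CommSemiring R] [AddCommMonoid M]
    [Module R M] {f : End R M} {p : Submodule R M} (hp : p ∈ f.invtSubmodule) :
    p.dualAnnihilator ∈ End.invtSubmodule f.dualMap := by
  intro φ hφ
  rw [mem_comap, mem_dualAnnihilator]
  exact fun w hw => (mem_dualAnnihilator φ).mp hφ _ (hp hw)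

theorem dualMap_toLin'_dotProductEquiv {R ι : Type*} [CommSemiring R] [Fintype ι] [DecidableEq ι]
    (A : Matrix ι ι R) (w : ι → R) :
    (toLin' A).dualMap (dotProductEquiv R ι w) = dotProductEquiv R ι (w ᵥ* A) :=
  LinearMap.ext fun v => dotProduct_mulVec w A v

variable {K V : Type*} [Field K] [IsAlgClosed K] [AddCommGroup V] [Module K V]
  [FiniteDimensional K V]

theorem exists_hasEigenvector_mem_of_mem_invtSubmodule {f : End K V} {p : Submodule K V}
    (hp : p ∈ f.invtSubmodule) (hne : p ≠ ⊥) : ∃ c, ∃ w ∈ p, f.HasEigenvector c w := by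
  have : Nontrivial p := nontrivial_iff_ne_bot.mpr hne
  obtain ⟨c, hc⟩ := End.exists_eigenvalue (f.restrict hp)
  obtain ⟨w, hw⟩ := hc.exists_hasEigenvector
  refine ⟨c, w, w.2, End.mem_eigenspace_iff.mpr ?_, by simpa using hw.2⟩
  exact congrArg Subtype.val hw.apply_eq_smul

theorem linearIndependent_pow_apply_of_forall_dual_eigenvector {f : End K V} {v : V}
    (h : ∀ (c : K) (φ : Dual K V), f.dualMap φ = c • φ → φ v = 0 → φ = 0) :
    LinearIndependent K fun k : Fin (finrank K V) => (f ^ (k : ℕ)) v := by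
  set p := span K (Set.range fun k : Fin (finrank K V) => (f ^ (k : ℕ)) v)
  have pow_mem (k : ℕ) : (f ^ k) v ∈ p := pow_apply_mem_span_range_pow_lt_finrank f v k
  have hp : p ∈ f.invtSubmodule := by
    refine span_le.mpr ?_
    rintro _ ⟨k, rfl⟩
    rw [SetLike.mem_coe, mem_comap, ← End.mul_apply, ← pow_succ']
    exact pow_mem (k + 1)
  refine linearIndependent_of_top_le_span_of_card_eq_finrank ?_ (Fintype.card_fin _)
  suffices p.dualAnnihilator = ⊥ from (dualAnnihilator_eq_bot_iff.mp this).ge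
  by_contra hne
  obtain ⟨c, φ, hφp, hφ⟩ := exists_hasEigenvector_mem_of_mem_invtSubmodule
    (dualAnnihilator_mem_invtSubmodule_dualMap hp) hne
  exact hφ.2 (h c φ hφ.apply_eq_smul ((mem_dualAnnihilator φ).mp hφp v (pow_mem 0)))

theorem linearIndependent_pow_mulVec_of_forall_left_eigenvector {ι : Type*} [Fintype ι]
    [DecidableEq ι] {A : Matrix ι ι K} {v : ι → K}
    (h : ∀ (c : K) (w : ι → K), w ᵥ* A = c • w → w ⬝ᵥ v = 0 → w = 0) :
    LinearIndependent K fun k : Fin (Fintype.card ι) => A ^ (k : ℕ) *ᵥ v := by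
  have hdual : ∀ (c : K) (φ : Dual K (ι → K)), (toLin' A).dualMap φ = c • φ → φ v = 0 → φ = 0 := by
    intro c φ hφ hφv
    obtain ⟨w, rfl⟩ := (dotProductEquiv K ι).surjective φ
    rw [h c w ?_ hφv, map_zero]
    apply (dotProductEquiv K ι).injective
    rw [map_smul, ← hφ, dualMap_toLin'_dotProductEquiv]
  rw [← finrank_fintype_fun_eq_card K]
  simpa only [← toLin'_pow, toLin'_apply] using
    linearIndependent_pow_apply_of_forall_dual_eigenvector hdual

end Hautus

section SignedColumnMatrix

variable {R ι : Type*} [CommRing R] [LinearOrder ι]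

/-- The matrix `T` of the theorem with the variables replaced by arbitrary ring elements `x j`,
indexed by any linear order: column `j` has entries `x j` above the diagonal, `0` on it and `-x j`
below it. -/
def signedColumnMatrix (x : ι → R) : Matrix ι ι R :=
  of fun i j => if i = j then 0 else if i < j then x j else -x j

theorem map_signedColumnMatrix {S : Type*} [CommRing S] (f : R →+* S) (x : ι → R) :
    (signedColumnMatrix x).map f = signedColumnMatrix (f ∘ x) := by
  ext i j
  simp [signedColumnMatrix, apply_ite f]

variable [Fintype ι]

theorem comp_signedColumnMatrix_pow_mulVec_one {S : Type*} [CommRing S] (f : R →+* S) (x : ι → R)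
    (k : ℕ) : f ∘ (signedColumnMatrix x ^ k *ᵥ 1) = signedColumnMatrix (f ∘ x) ^ k *ᵥ 1 := by
  ext i
  simp [RingHom.map_mulVec, Matrix.map_pow, map_signedColumnMatrix]

variable {x w : ι → R} {j k : ι}

theorem vecMul_signedColumnMatrix_apply_of_forall_lt (hw : ∑ i, w i = 0)
    (hj : ∀ i < j, w i = 0) : (w ᵥ* signedColumnMatrix x) j = x j * w j := by
  have entry (i : ι) : w i * signedColumnMatrix x i j
      = w i * -x j + if i = j then x j * w j else 0 := by
    rcases lt_trichotomy i j with hij | rfl | hij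
    · simp [hj i hij, hij.ne]
    · simp [signedColumnMatrix, mul_comm]
    · simp [signedColumnMatrix, hij.ne', hij.not_gt]
  simp [vecMul, dotProduct, entry, Finset.sum_add_distrib, ← Finset.sum_mul, hw]

theorem vecMul_signedColumnMatrix_apply_of_forall_gt (hw : ∑ i, w i = 0)
    (hk : ∀ i > k, w i = 0) : (w ᵥ* signedColumnMatrix x) k = -x k * w k := by
  have entry (i : ι) : w i * signedColumnMatrix x i k
      = w i * x k - if i = k then x k * w k else 0 := by
    rcases lt_trichotomy i k with hik | rfl | hik
    · simp [signedColumnMatrix, hik.ne, hik]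
    · simp [signedColumnMatrix, mul_comm]
    · simp [hk i hik, hik.ne']
  simp [vecMul, dotProduct, entry, Finset.sum_sub_distrib, ← Finset.sum_mul, hw]

theorem exists_lt_first_last_ne_zero_of_sum_eq_zero {M : Type*} [AddCommMonoid M] {w : ι → M}
    (hw : ∑ i, w i = 0) (hne : w ≠ 0) :
    ∃ j k, j < k ∧ (w j ≠ 0 ∧ ∀ i < j, w i = 0) ∧ (w k ≠ 0 ∧ ∀ i > k, w i = 0) := by
  obtain ⟨j, hj, hj_min⟩ := wellFounded_lt.has_min {i | w i ≠ 0} (Function.ne_iff.mp hne)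
  obtain ⟨k, hk, hk_max⟩ := wellFounded_gt.has_min {i | w i ≠ 0} (Function.ne_iff.mp hne)
  have hj_lt : ∀ i < j, w i = 0 := fun i hi => by_contra fun h => hj_min i h hi
  have hk_gt : ∀ i > k, w i = 0 := fun i hi => by_contra fun h => hk_max i h hi
  refine ⟨j, k, ?_, ⟨hj, hj_lt⟩, hk, hk_gt⟩
  by_contra! hkj
  have hsum : ∑ i, w i = w j := Fintype.sum_eq_single j fun i hi =>
    hi.lt_or_gt.elim (hj_lt i) fun hij => hk_gt i (hkj.trans_lt hij)
  exact hj (hsum ▸ hw)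

theorem exists_add_eq_zero_of_vecMul_signedColumnMatrix_eq_smul [NoZeroDivisors R] {c : R}
    (hwc : w ᵥ* signedColumnMatrix x = c • w) (hw : ∑ i, w i = 0) (hne : w ≠ 0) :
    ∃ j k, j < k ∧ x j + x k = 0 := by
  obtain ⟨j, k, hjk, ⟨hj, hj_lt⟩, hk, hk_gt⟩ := exists_lt_first_last_ne_zero_of_sum_eq_zero hw hne
  have hcj : x j = c := mul_right_cancel₀ hj <| by
    rw [← vecMul_signedColumnMatrix_apply_of_forall_lt hw hj_lt, hwc, Pi.smul_apply, smul_eq_mul]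
  have hck : -x k = c := mul_right_cancel₀ hk <| by
    rw [← vecMul_signedColumnMatrix_apply_of_forall_gt hw hk_gt, hwc, Pi.smul_apply, smul_eq_mul]
  exact ⟨j, k, hjk, by rw [hcj, ← hck, neg_add_cancel]⟩

theorem linearIndependent_signedColumnMatrix_pow_ones_of_isAlgClosed {K : Type*} [Field K]
    [IsAlgClosed K] {x : ι → K} (hx : ∀ i j, i < j → x i + x j ≠ 0) :
    LinearIndependent K fun k : Fin (Fintype.card ι) => signedColumnMatrix x ^ (k : ℕ) *ᵥ 1 := by
  refine linearIndependent_pow_mulVec_of_forall_left_eigenvector fun c w hwc hw => ?_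
  by_contra hne
  obtain ⟨j, k, hjk, hadd⟩ :=
    exists_add_eq_zero_of_vecMul_signedColumnMatrix_eq_smul hwc (by rwa [← dotProduct_one]) hne
  exact hx j k hjk hadd

end SignedColumnMatrix

theorem linearIndependent_Tmat_pow_ones_general {R : Type*} [CommRing R] [IsDomain R] {n : ℕ}
    {x : Fin n → R} (hx : ∀ i j, i < j → x i + x j ≠ 0) :
    LinearIndependent R fun k : Fin n => signedColumnMatrix x ^ (k : ℕ) *ᵥ 1 := by
  let K := AlgebraicClosure (FractionRing R)
  have : FaithfulSMul R K := .trans R (FractionRing R) K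
  have hxK (i j : Fin n) (hij : i < j) : (algebraMap R K ∘ x) i + (algebraMap R K ∘ x) j ≠ 0 := by
    rw [Function.comp_apply, Function.comp_apply, ← map_add]
    exact (map_ne_zero_iff _ (FaithfulSMul.algebraMap_injective R K)).mpr (hx i j hij)
  have hK := linearIndependent_signedColumnMatrix_pow_ones_of_isAlgClosed hxK
  rw [Fintype.card_fin] at hK
  rw [← linearIndependent_algebraMap_comp_iff (S := K)]
  simpa only [comp_signedColumnMatrix_pow_mulVec_one] using hK

/-- The `n` vectors `v, Tv, T²v, …, T^{n-1}v` of the free module `R^n`, where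
`v = (1, …, 1)` and `R = ℂ[x_1, …, x_n]`, are linearly independent over `R`. -/
theorem linearIndependent_Tmat_pow_ones (n : ℕ) (hn : 1 ≤ n) :
    LinearIndependent (MvPolynomial (Fin n) ℂ)
      (fun k : Fin n =>
        ((Tmat n) ^ (k : ℕ)).mulVec (fun _ => (1 : MvPolynomial (Fin n) ℂ))) :=
  linearIndependent_Tmat_pow_ones_general (x := X) fun i j _ h => by
    simpa using congrArg (eval 1) h
end

section
/- The algebra C satisfies the standard polynomial identity of degree N = 2^{⌊n/2⌋ + 1}: for any elements u_1, …, u_N ∈ C one has Σ_{σ ∈ S_N} sgn(σ)·u_{σ(1)}·u_{σ(2)}·⋯·u_{σ(N)} = 0. (This is the Amitsur–Levitzki identity for the enveloping algebra U(𝔥) of the Cartan subalgebra 𝔥 of the queer Lie superalgebra Q(n), with k = n/2 for even n and k = (n−1)/2 for odd n.) -/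
open MvPolynomial

/-- The quadratic form `Q(v) = Σ_i x_i v_i²` on the free module `R^n`, where
`R = ℂ[x_1, …, x_n]`. -/
noncomputable def Qform (n : ℕ) :
    QuadraticForm (MvPolynomial (Fin n) ℂ) (Fin n → MvPolynomial (Fin n) ℂ) :=
  QuadraticMap.weightedSumSquares (MvPolynomial (Fin n) ℂ) (fun i => (X i : MvPolynomial (Fin n) ℂ))

/-!
Rosset's proof of the Amitsur–Levitzki theorem: for `m × m` matrices `u₁, …, u_{2m}` and exterior
generators `θ₁, …, θ_{2m}`, the top coefficient of `(∑ uᵢ θᵢ) ^ (2m)` is the standard polynomial at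
`u`. The square of `∑ uᵢ θᵢ` has entries in a commutative ring, and all its powers have trace zero,
so its characteristic polynomial `χ` satisfies `X χ' = m χ`. Hence `χ = X ^ m`, and the `m`-th power
of the square vanishes by Cayley–Hamilton.

The identity passes from matrices to algebras generated by anticommuting elements because two words
in such generators commute up to a sign depending only on the words. At given words the standard
polynomial is therefore an integer multiple of their product, and this integer may be computed in
any torsion-free ring with enough invertible anticommuting elements. There are `2k + 1` of these
among the rational matrices of size `2 ^ k`, which satisfy the identity, so the integer is zero.
-/

open Function (onFun)
open scoped Function Polynomial

/-! ### The standard identity -/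

section StandardIdentity

variable {A : Type*} [Ring A] {N : ℕ}

/-- The standard polynomial of degree `N`, evaluated at `u₁, …, u_N`. -/
def standardSum (u : Fin N → A) : A :=
  ∑ σ : Equiv.Perm (Fin N), (Equiv.Perm.sign σ : ℤ) • (List.ofFn fun i => u (σ i)).prod

/-- The ring `A` satisfies the standard polynomial identity of degree `N`. -/
def SatisfiesStandardIdentity (A : Type*) [Ring A] (N : ℕ) : Prop :=
  ∀ u : Fin N → A, standardSum u = 0

theorem map_standardSum {B : Type*} [Ring B] (f : A →+* B) (u : Fin N → A) :
    f (standardSum u) = standardSum fun i => f (u i) := by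
  simp [standardSum, map_list_prod, List.map_ofFn, Function.comp_def]

theorem alternatization_mkPiAlgebraFin_apply (R : Type*) [CommRing R] [Algebra R A]
    (u : Fin N → A) :
    (MultilinearMap.mkPiAlgebraFin R N A).alternatization u = standardSum u := by
  simp [MultilinearMap.alternatization_apply, standardSum, Units.smul_def]

theorem SatisfiesStandardIdentity.of_span_eq_top {R ι : Type*} [CommRing R] [Algebra R A]
    {g : ι → A} (hg : Submodule.span R (Set.range g) = ⊤)
    (h : ∀ w : Fin N → ι, standardSum (fun i => g (w i)) = 0) : SatisfiesStandardIdentity A N := by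
  have hzero : (MultilinearMap.mkPiAlgebraFin R N A).alternatization.toMultilinearMap = 0 :=
    MultilinearMap.ext_of_span_eq_top (g := fun _ => g) (fun _ => hg) fun w =>
      (alternatization_mkPiAlgebraFin_apply R _).trans (h w)
  exact fun u => (alternatization_mkPiAlgebraFin_apply R u).symm.trans (congrArg (· u) hzero)

end StandardIdentity

/-! ### Matrices whose powers have trace zero -/

section TracePowers

variable {n R : Type*} [Fintype n] [DecidableEq n] [CommRing R]

theorem derivative_det (M : Matrix n n R[X]) :
    M.det.derivative = (M.adjugate * M.map Polynomial.derivative).trace := by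
  have hdiag (i : n) : (M.adjugate * M.map Polynomial.derivative).diag i =
      (M.updateCol i fun j => (M j i).derivative).det := by
    rw [← Matrix.cramer_apply, Matrix.cramer_eq_adjugate_mulVec]
    rfl
  simp only [Matrix.trace, hdiag, Matrix.det_apply, Polynomial.derivative_sum]
  rw [Finset.sum_comm]
  refine Finset.sum_congr rfl fun σ _ => ?_
  rw [← Finset.smul_sum, Units.smul_def, Units.smul_def, Polynomial.derivative_smul,
    Polynomial.derivative_prod_finset]
  congr 1
  refine Finset.sum_congr rfl fun i hi => ?_
  rw [← Finset.prod_erase_mul _ _ hi, Matrix.updateCol_self]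
  congr 1
  exact Finset.prod_congr rfl fun j hj => (Matrix.updateCol_ne (Finset.ne_of_mem_erase hj)).symm

theorem derivative_charpoly (B : Matrix n n R) :
    B.charpoly.derivative = B.charmatrix.adjugate.trace := by
  have hone : B.charmatrix.map Polynomial.derivative = 1 := by
    ext i j : 1
    by_cases h : i = j <;> simp [Matrix.one_apply, h]
  rw [Matrix.charpoly, derivative_det, hone, mul_one]

theorem adjugate_mem_adjoin_singleton {M : Matrix n n R} (hM : M.det ∈ nonZeroDivisors R) :
    M.adjugate ∈ Algebra.adjoin R {M} := by
  set ε : R := (-1) ^ Fintype.card n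
  have hε : ε * ε = 1 := by rw [← mul_pow, neg_one_mul, neg_neg, one_pow]
  have hcoeff : M.charpoly.coeff 0 = ε * M.det := by
    rw [M.det_eq_sign_charpoly_coeff, ← mul_assoc, hε, one_mul]
  set Z := Polynomial.aeval M M.charpoly.divX
  have hZ : M * Z = -((ε * M.det) • 1) := by
    have h := M.aeval_self_charpoly
    rw [← Polynomial.X_mul_divX_add M.charpoly, map_add, map_mul, Polynomial.aeval_X,
      Polynomial.aeval_C, Algebra.algebraMap_eq_smul_one, hcoeff] at h
    exact eq_neg_of_add_eq_zero_left h
  have hdet : M.det • M.adjugate = M.det • (-ε • Z) := by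
    have h : M.det • Z = -((ε * M.det) • M.adjugate) := by
      rw [← one_mul Z, ← smul_mul_assoc, ← M.adjugate_mul, mul_assoc, hZ, mul_neg,
        mul_smul_comm, mul_one]
    rw [smul_comm, h, smul_neg, neg_smul, neg_neg, smul_smul, ← mul_assoc, hε, one_mul]
  have hcancel : M.adjugate = -ε • Z := by
    ext i j
    exact (mul_cancel_left_mem_nonZeroDivisors hM).mp (congrFun (congrFun hdet i) j)
  rw [hcancel]
  exact Subalgebra.smul_mem _ (Polynomial.aeval_mem_adjoin_singleton R M) _

theorem trace_mul_eq_zero_of_mem_adjoin_singleton {B Z : Matrix n n R}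
    (hB : ∀ k, 0 < k → (B ^ k).trace = 0) (hZ : Z ∈ Algebra.adjoin R {B}) :
    (Z * B).trace = 0 := by
  rw [Algebra.adjoin_singleton_eq_range_aeval] at hZ
  obtain ⟨p, rfl⟩ := hZ
  simp [Polynomial.aeval_eq_sum_range, Finset.sum_mul, Matrix.trace_sum, ← pow_succ, hB]

/-- Take traces in `adj (X - B) * (X - B) = χ`, where `adj (X - B)` is a polynomial in `B`. -/
theorem X_mul_derivative_charpoly {B : Matrix n n R} (hB : ∀ k, 0 < k → (B ^ k).trace = 0) :
    Polynomial.X * B.charpoly.derivative = (Fintype.card n : R[X]) * B.charpoly := by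
  set B' : Matrix n n R[X] := Polynomial.C.mapMatrix B
  have hB' (k : ℕ) (hk : 0 < k) : (B' ^ k).trace = 0 := by
    rw [← map_pow, RingHom.mapMatrix_apply, ← AddMonoidHom.map_trace, hB k hk, map_zero]
  have hchar : B.charmatrix ∈ Algebra.adjoin R[X] {B'} :=
    sub_mem (Subalgebra.algebraMap_mem _ Polynomial.X) (Algebra.self_mem_adjoin_singleton _ _)
  have hadj : B.charmatrix.adjugate ∈ Algebra.adjoin R[X] {B'} :=
    Algebra.adjoin_le (Set.singleton_subset_iff.mpr hchar)
      (adjugate_mem_adjoin_singleton B.charpoly_monic.mem_nonZeroDivisors)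
  have hmul : (Polynomial.X : R[X]) • B.charmatrix.adjugate - B.charmatrix.adjugate * B' =
      B.charpoly • 1 := by
    rw [Matrix.charpoly, ← Matrix.adjugate_mul, Matrix.charmatrix, mul_sub,
      Matrix.scalar_apply, ← Matrix.smul_one_eq_diagonal, mul_smul_comm, mul_one]
  have htrace := congrArg Matrix.trace hmul
  rw [Matrix.trace_sub, trace_mul_eq_zero_of_mem_adjoin_singleton hB' hadj, sub_zero,
    Matrix.trace_smul, Matrix.trace_smul, Matrix.trace_one, smul_eq_mul, smul_eq_mul,
    ← derivative_charpoly] at htrace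
  rw [htrace, mul_comm]

theorem charpoly_eq_X_pow_of_trace_pow_eq_zero [IsAddTorsionFree R] {B : Matrix n n R}
    (hB : ∀ k, 0 < k → (B ^ k).trace = 0) : B.charpoly = Polynomial.X ^ Fintype.card n := by
  nontriviality R
  have hcoeff (k : ℕ) : k • B.charpoly.coeff k = Fintype.card n • B.charpoly.coeff k := by
    have h := congrArg (Polynomial.coeff · k) (X_mul_derivative_charpoly hB)
    cases k with
    | zero => simpa using h
    | succ k => simpa [Polynomial.coeff_derivative, mul_comm] using h
  ext k
  rw [Polynomial.coeff_X_pow]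
  split_ifs with hk
  · rw [hk, ← B.charpoly_natDegree_eq_dim, B.charpoly_monic.coeff_natDegree]
  · by_contra h
    exact hk (Int.ofNat_inj.mp (smul_left_injective ℤ h (by simpa using hcoeff k)))

theorem pow_card_eq_zero_of_trace_pow_eq_zero [IsAddTorsionFree R] {B : Matrix n n R}
    (hB : ∀ k, 0 < k → (B ^ k).trace = 0) : B ^ Fintype.card n = 0 := by
  simpa [charpoly_eq_X_pow_of_trace_pow_eq_zero hB] using B.aeval_self_charpoly

end TracePowers

/-! ### Matrices over the exterior algebra -/

section Anticommute

variable {A : Type*} [Ring A] {a b c : A}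

/-- Two elements of a ring anticommute if `a * b = -(b * a)`, the signed analogue of `Commute`. -/
def Anticommute (a b : A) : Prop :=
  a * b = -(b * a)

namespace Anticommute

theorem symm (h : Anticommute a b) : Anticommute b a :=
  (neg_eq_iff_eq_neg.mpr h).symm

instance : Std.Symm (Anticommute (A := A)) :=
  ⟨fun _ _ => symm⟩

theorem map {B : Type*} [Ring B] (f : A →+* B) (h : Anticommute a b) : Anticommute (f a) (f b) := by
  rw [Anticommute, ← map_mul, h, map_neg, map_mul]

theorem commute_mul_left (ha : Anticommute a c) (hb : Anticommute b c) : Commute (a * b) c := by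
  rw [commute_iff_eq, mul_assoc, hb, mul_neg, ← mul_assoc, ha, neg_mul, neg_neg, mul_assoc]

theorem mul_left_of_commute (ha : Anticommute a c) (hb : Commute b c) : Anticommute (b * a) c := by
  rw [Anticommute, mul_assoc, ha, mul_neg, ← mul_assoc, hb.eq, mul_assoc]

theorem sum_left {ι : Type*} {s : Finset ι} {f : ι → A} (h : ∀ i ∈ s, Anticommute (f i) c) :
    Anticommute (∑ i ∈ s, f i) c := by
  rw [Anticommute, Finset.sum_mul, Finset.mul_sum, ← Finset.sum_neg_distrib]
  exact Finset.sum_congr rfl h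

end Anticommute

theorem trace_mul_eq_neg_of_anticommute {m n : Type*} [Fintype m] [Fintype n]
    {M : Matrix m n A} {N : Matrix n m A} (h : ∀ i j, Anticommute (M i j) (N j i)) :
    (M * N).trace = -(N * M).trace := by
  simp only [Matrix.trace, Matrix.diag_apply, Matrix.mul_apply, ← Finset.sum_neg_distrib]
  rw [Finset.sum_comm]
  exact Finset.sum_congr rfl fun j _ => Finset.sum_congr rfl fun i _ => h i j

theorem trace_mul_mul_self_eq_zero [IsAddTorsionFree A] {n : Type*} [Fintype n]
    {Z M : Matrix n n A} (hM : ∀ i j k l, Anticommute (M i j) (M k l))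
    (hZM : ∀ i j k l, Commute (Z i j) (M k l)) (hcomm : Commute Z M) :
    (Z * (M * M)).trace = 0 := by
  have hanti : (Z * M * M).trace = -(M * (Z * M)).trace :=
    trace_mul_eq_neg_of_anticommute fun i j => Anticommute.sum_left fun k _ =>
      (hM k j j i).mul_left_of_commute (hZM i k j i)
  rw [← mul_assoc, ← hcomm.eq, mul_assoc] at hanti
  exact self_eq_neg.mp hanti

end Anticommute

section ExteriorAlgebra

variable {R M : Type*} [CommRing R] [AddCommGroup M] [Module R M]

theorem anticommute_ι (x y : M) : Anticommute (ExteriorAlgebra.ι R x) (ExteriorAlgebra.ι R y) :=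
  eq_neg_of_add_eq_zero_left (ExteriorAlgebra.ι_add_mul_swap x y)

theorem ι_mul_ι_mem_center (x y : M) :
    ExteriorAlgebra.ι R x * ExteriorAlgebra.ι R y ∈ Subring.center (ExteriorAlgebra R M) := by
  rw [Subring.mem_center_iff]
  intro g
  change Commute g _
  induction g using ExteriorAlgebra.induction with
  | algebraMap r => exact Algebra.commute_algebraMap_left r _
  | ι z => exact ((anticommute_ι x z).commute_mul_left (anticommute_ι y z)).symm
  | mul a b ha hb => exact ha.mul_left hb
  | add a b ha hb => exact ha.add_left hb

theorem matrix_map_ι_pow_eq_zero [IsAddTorsionFree (ExteriorAlgebra R M)] {n : Type*} [Fintype n]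
    [DecidableEq n] (v : Matrix n n M) :
    v.map (ExteriorAlgebra.ι R) ^ (2 * Fintype.card n) = 0 := by
  set A := v.map (ExteriorAlgebra.ι R)
  let f := (Subring.center (ExteriorAlgebra R M)).subtype
  have hf : Function.Injective f := Subtype.val_injective
  have : IsAddTorsionFree (Subring.center (ExteriorAlgebra R M)) :=
    hf.isAddTorsionFree f.toAddMonoidHom
  obtain ⟨B, hB⟩ : ∃ B : Matrix n n (Subring.center (ExteriorAlgebra R M)),
      f.mapMatrix B = A * A :=
    ⟨.of fun i j => ⟨(A * A) i j, Subring.sum_mem _ fun k _ => ι_mul_ι_mem_center _ _⟩, rfl⟩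
  have htrace (k : ℕ) (hk : 0 < k) : (B ^ k).trace = 0 := by
    obtain ⟨k, rfl⟩ := Nat.exists_eq_succ_of_ne_zero hk.ne'
    have hcomm : Commute (f.mapMatrix (B ^ k)) A := by
      rw [map_pow, hB]
      exact ((Commute.refl A).mul_left (Commute.refl A)).pow_left k
    apply hf
    rw [map_zero, AddMonoidHom.map_trace f, ← RingHom.mapMatrix_apply, pow_succ, map_mul, hB]
    exact trace_mul_mul_self_eq_zero (fun i j k l => anticommute_ι _ _)
      (fun i j k l => ((Subring.mem_center_iff.mp ((B ^ _) i j).2 _).symm : Commute _ _)) hcomm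
  rw [pow_mul, sq, ← hB, ← map_pow, pow_card_eq_zero_of_trace_pow_eq_zero htrace, map_zero]

end ExteriorAlgebra

/-! ### The Amitsur–Levitzki theorem -/

section AmitsurLevitzki

variable {n R : Type*} [Fintype n] [CommRing R] {N : ℕ}

theorem sum_eq_sum_perm {α M : Type*} [Fintype α] [DecidableEq α] [AddCommMonoid M]
    (f : (α → α) → M) (hf : ∀ g, ¬ Function.Injective g → f g = 0) :
    ∑ g, f g = ∑ σ : Equiv.Perm α, f σ := by
  refine (Finset.sum_of_injOn (fun σ : Equiv.Perm α => ⇑σ) DFunLike.coe_injective.injOn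
    (fun _ _ => Finset.mem_coe.mpr (Finset.mem_univ _)) (fun g _ hg => hf g fun hinj => hg ?_)
    fun _ _ => rfl).symm
  exact ⟨Equiv.ofBijective g (Finite.injective_iff_bijective.mp hinj), by simp, rfl⟩

variable [DecidableEq n]

theorem list_prod_ofFn_map_smul {A : Type*} [Ring A] [Algebra R A] (u : Fin N → Matrix n n R)
    (e : Fin N → A) : (List.ofFn fun i => (u i).map (· • e i)).prod =
      (List.ofFn u).prod.map (· • (List.ofFn e).prod) := by
  induction N with
  | zero =>
    ext i j
    by_cases h : i = j <;> simp [h]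
  | succ N ih =>
    simp only [List.ofFn_succ, List.prod_cons, ih]
    ext i j
    simp [Matrix.mul_apply, Finset.sum_smul, smul_smul, mul_comm]

variable {M : Type*} [AddCommGroup M] [Module R M]

theorem sum_map_smul_ι_pow (u : Fin N → Matrix n n R) (e : Fin N → M) :
    (∑ i, (u i).map (· • ExteriorAlgebra.ι R (e i))) ^ N =
      (standardSum u).map (· • ExteriorAlgebra.ιMulti R N e) := by
  rw [← MultilinearMap.mkPiAlgebraFin_apply_const (R := R), MultilinearMap.map_sum]
  simp only [MultilinearMap.mkPiAlgebraFin_apply, list_prod_ofFn_map_smul,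
    ← ExteriorAlgebra.ιMulti_apply]
  rw [sum_eq_sum_perm]
  · ext i j : 1
    simp only [standardSum, Matrix.sum_apply, Matrix.map_apply, Matrix.smul_apply,
      Finset.sum_smul, ← Function.comp_def e, AlternatingMap.map_perm, Units.smul_def]
    exact Finset.sum_congr rfl fun σ _ => (smul_comm _ _ _).trans (smul_assoc _ _ _).symm
  · intro g hg
    have h : ExteriorAlgebra.ιMulti R N (fun i => e (g i)) = 0 :=
      (ExteriorAlgebra.ιMulti R N).map_eq_zero_of_not_injective _ fun h => hg h.of_comp
    ext i j : 1
    simp [h]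

theorem smul_ιMulti_basis_injective (b : Module.Basis (Fin N) R M) :
    Function.Injective fun r : R => r • ExteriorAlgebra.ιMulti R N b := by
  have h (r : R) : ExteriorAlgebra.liftAlternating (Pi.single N b.det)
      (r • ExteriorAlgebra.ιMulti R N b) = r := by
    rw [map_smul, ExteriorAlgebra.liftAlternating_apply_ιMulti, Pi.single_eq_same, b.det_self,
      smul_eq_mul, mul_one]
  exact Function.LeftInverse.injective h

theorem isAddTorsionFree_of_rat_algebra (R M : Type*) [CommRing R] [Algebra ℚ R] [AddCommGroup M]
    [Module R M] : IsAddTorsionFree M :=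
  letI := Module.compHom M (algebraMap ℚ R)
  IsAddTorsionFree.of_module_rat M

theorem amitsur_levitzki [Algebra ℚ R] :
    SatisfiesStandardIdentity (Matrix n n R) (2 * Fintype.card n) := by
  intro u
  let b := Pi.basisFun R (Fin (2 * Fintype.card n))
  have := isAddTorsionFree_of_rat_algebra R (ExteriorAlgebra R (Fin (2 * Fintype.card n) → R))
  have hv : (∑ i, (u i).map (· • b i)).map (ExteriorAlgebra.ι R) =
      ∑ i, (u i).map (· • ExteriorAlgebra.ι R (b i)) := by
    ext i j
    simp [Matrix.sum_apply]
  have hzero := matrix_map_ι_pow_eq_zero (R := R) (∑ i, (u i).map (· • b i))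
  rw [hv, sum_map_smul_ι_pow] at hzero
  ext i j
  exact smul_ιMulti_basis_injective b (by simpa using congrFun (congrFun hzero i) j)

end AmitsurLevitzki

/-! ### Commutation up to sign -/

section CommuteUpToSign

variable {A : Type*} [Ring A] {a b c : A}

/-- Two elements of a ring commute up to sign if they commute or anticommute. The sign is a unit of
`ℤ`, so that signs multiply and invert along chains of transpositions. -/
def CommuteUpToSign (a b : A) : Prop :=
  ∃ s : ℤˣ, a * b = s • (b * a)

theorem Anticommute.commuteUpToSign (h : Anticommute a b) : CommuteUpToSign a b :=
  ⟨-1, by rw [h, Units.neg_smul, one_smul]⟩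

namespace CommuteUpToSign

theorem refl (a : A) : CommuteUpToSign a a :=
  ⟨1, (one_smul _ _).symm⟩

theorem symm : CommuteUpToSign a b → CommuteUpToSign b a
  | ⟨s, hs⟩ => ⟨s⁻¹, by rw [hs, inv_smul_smul]⟩

theorem one_right (a : A) : CommuteUpToSign a 1 :=
  ⟨1, by simp⟩

theorem mul_right : CommuteUpToSign a b → CommuteUpToSign a c → CommuteUpToSign a (b * c)
  | ⟨s, hs⟩, ⟨t, ht⟩ => ⟨s * t, by
      rw [← mul_assoc, hs, smul_mul_assoc, mul_assoc, ht, mul_smul_comm, smul_smul, mul_assoc]⟩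

theorem freeMonoid_lift_right {I : Type*} {g : I → A} (h : ∀ i, CommuteUpToSign a (g i))
    (w : FreeMonoid I) : CommuteUpToSign a (FreeMonoid.lift g w) := by
  induction w using FreeMonoid.inductionOn with
  | one => rw [map_one]; exact one_right a
  | of i => exact h i
  | mul v w hv hw => rw [map_mul]; exact hv.mul_right hw

theorem freeMonoid_lift {I : Type*} {g : I → A} (h : ∀ i j, CommuteUpToSign (g i) (g j))
    (v w : FreeMonoid I) : CommuteUpToSign (FreeMonoid.lift g v) (FreeMonoid.lift g w) :=
  freeMonoid_lift_right (fun i => (freeMonoid_lift_right (h i) v).symm) w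

theorem exists_list_prod_eq_smul {l l' : List A} (hperm : l.Perm l')
    (h : ∀ a ∈ l, ∀ b ∈ l, CommuteUpToSign a b) : ∃ s : ℤˣ, l.prod = s • l'.prod := by
  induction hperm with
  | nil => exact ⟨1, (one_smul _ _).symm⟩
  | cons x _ ih =>
    obtain ⟨s, hs⟩ := ih fun a ha b hb => h a (.tail x ha) b (.tail x hb)
    exact ⟨s, by rw [List.prod_cons, List.prod_cons, hs, mul_smul_comm]⟩
  | swap x y l =>
    obtain ⟨s, hs⟩ := h y (by simp) x (by simp)
    exact ⟨s, by simp only [List.prod_cons, ← mul_assoc, hs, smul_mul_assoc]⟩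
  | trans hp _ ih₁ ih₂ =>
    obtain ⟨s, hs⟩ := ih₁ h
    obtain ⟨t, ht⟩ := ih₂ fun a ha b hb => h a (hp.mem_iff.mpr ha) b (hp.mem_iff.mpr hb)
    exact ⟨s * t, by rw [hs, ht, smul_smul]⟩

theorem exists_standardSum_eq_smul {N : ℕ} {u : Fin N → A}
    (h : ∀ i j, CommuteUpToSign (u i) (u j)) :
    ∃ m : ℤ, standardSum u = m • (List.ofFn u).prod := by
  have hperm (σ : Equiv.Perm (Fin N)) :
      ∃ s : ℤˣ, (List.ofFn fun i => u (σ i)).prod = s • (List.ofFn u).prod := by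
    refine exists_list_prod_eq_smul (σ.ofFn_comp_perm u) ?_
    simp only [List.mem_ofFn, forall_exists_index, forall_apply_eq_imp_iff]
    exact fun i j => h (σ i) (σ j)
  choose s hs using hperm
  exact ⟨∑ σ, Equiv.Perm.sign σ * s σ, by
    simp only [standardSum, hs, Finset.sum_smul, mul_smul, Units.smul_def]⟩

end CommuteUpToSign

theorem span_range_freeMonoid_lift_eq_top {R I : Type*} [CommRing R] [Algebra R A] {g : I → A}
    (hg : Algebra.adjoin R (Set.range g) = ⊤) :
    Submodule.span R (Set.range (FreeMonoid.lift g)) = ⊤ := by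
  rw [← MonoidHom.coe_mrange, FreeMonoid.mrange_lift, ← Algebra.adjoin_eq_span, hg,
    Algebra.top_toSubmodule]

theorem isUnit_freeMonoid_lift {M I : Type*} [Monoid M] {h : I → M} (hh : ∀ i, IsUnit (h i))
    (w : FreeMonoid I) : IsUnit (FreeMonoid.lift h w) := by
  rw [FreeMonoid.lift_apply]
  exact List.prod_isUnit (List.forall_mem_map.mpr fun i _ => hh i)

/-- The pairs express that `g` and `h` commute up to the same signs. -/
theorem SatisfiesStandardIdentity.of_commuteUpToSign {R B I : Type*} [CommRing R] [Algebra R A]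
    [Ring B] [Nontrivial B] [IsAddTorsionFree B] {N : ℕ} (hB : SatisfiesStandardIdentity B N)
    {g : I → A} {h : I → B} (hg : Algebra.adjoin R (Set.range g) = ⊤) (hh : ∀ i, IsUnit (h i))
    (hgh : ∀ i j, CommuteUpToSign (g i, h i) (g j, h j)) : SatisfiesStandardIdentity A N := by
  refine .of_span_eq_top (span_range_freeMonoid_lift_eq_top hg) fun w => ?_
  let p (i : I) : A × B := (g i, h i)
  have hfst (v : FreeMonoid I) : RingHom.fst A B (FreeMonoid.lift p v) = FreeMonoid.lift g v :=
    FreeMonoid.hom_map_lift (RingHom.fst A B : A × B →* A) p v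
  have hsnd (v : FreeMonoid I) : RingHom.snd A B (FreeMonoid.lift p v) = FreeMonoid.lift h v :=
    FreeMonoid.hom_map_lift (RingHom.snd A B : A × B →* B) p v
  obtain ⟨m, hm⟩ : ∃ m : ℤ, standardSum (fun i => FreeMonoid.lift p (w i)) =
      m • FreeMonoid.lift p (List.ofFn w).prod := by
    rw [map_list_prod, List.map_ofFn]
    exact CommuteUpToSign.exists_standardSum_eq_smul fun i j =>
      CommuteUpToSign.freeMonoid_lift hgh (w i) (w j)
  have hm0 : m = 0 := by
    have hzero := congrArg (RingHom.snd A B) hm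
    rw [map_standardSum, hB, map_zsmul, hsnd] at hzero
    exact (smul_eq_zero.mp hzero.symm).resolve_right (isUnit_freeMonoid_lift hh _).ne_zero
  have hzero := congrArg (RingHom.fst A B) hm
  rwa [map_standardSum, hm0, zero_smul, map_zero, funext fun i => hfst (w i)] at hzero

end CommuteUpToSign

/-! ### Anticommuting invertible matrices -/

section GammaMatrices

variable {R : Type*} [CommRing R]

theorem exists_anticommuting_isUnit_matrix_sum {n : Type*} [Fintype n] [DecidableEq n] {m : ℕ}
    {γ : Fin m → Matrix n n R} (hunit : ∀ i, IsUnit (γ i)) (hanti : Pairwise (Anticommute on γ)) :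
    ∃ δ : Fin (m + 2) → Matrix (n ⊕ n) (n ⊕ n) R,
      (∀ i, IsUnit (δ i)) ∧ Pairwise (Anticommute on δ) := by
  let a : Matrix (n ⊕ n) (n ⊕ n) R := .fromBlocks 0 1 (-1) 0
  let b : Matrix (n ⊕ n) (n ⊕ n) R := .fromBlocks 1 0 0 (-1)
  let δ (i : Fin m) : Matrix (n ⊕ n) (n ⊕ n) R := .fromBlocks 0 (γ i) (γ i) 0
  have ha : IsUnit a := .of_mul_eq_one (-a) (by
    simp [a, Matrix.fromBlocks_multiply, Matrix.fromBlocks_neg])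
  have hb : IsUnit b := .of_mul_eq_one b (by simp [b, Matrix.fromBlocks_multiply])
  have hδ (i : Fin m) : IsUnit (δ i) := by
    obtain ⟨x, hx⟩ := (hunit i).exists_right_inv
    exact .of_mul_eq_one (.fromBlocks 0 x x 0) (by simp [δ, Matrix.fromBlocks_multiply, hx])
  have hab : Anticommute a b := by
    simp [Anticommute, a, b, Matrix.fromBlocks_multiply, Matrix.fromBlocks_neg]
  have haδ (i : Fin m) : Anticommute a (δ i) := by
    simp [Anticommute, a, δ, Matrix.fromBlocks_multiply, Matrix.fromBlocks_neg]
  have hbδ (i : Fin m) : Anticommute b (δ i) := by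
    simp [Anticommute, b, δ, Matrix.fromBlocks_multiply, Matrix.fromBlocks_neg]
  have hδδ : Pairwise (Anticommute on δ) := fun i j hij => by
    have h : γ i * γ j = -(γ j * γ i) := hanti hij
    simp [onFun, Anticommute, δ, Matrix.fromBlocks_multiply, Matrix.fromBlocks_neg, h]
  refine ⟨(Fin.cons a (Fin.cons b δ) : Fin (m + 1 + 1) → _), Fin.cases ha (Fin.cases hb hδ), ?_⟩
  exact pairwise_fin_succ_iff_of_isSymm.mpr ⟨Fin.cases hab haδ,
    pairwise_fin_succ_iff_of_isSymm.mpr ⟨hbδ, hδδ⟩⟩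

theorem exists_anticommuting_isUnit_matrix (R : Type*) [CommRing R] (k : ℕ) :
    ∃ γ : Fin (2 * k + 1) → Matrix (Fin (2 ^ k)) (Fin (2 ^ k)) R,
      (∀ i, IsUnit (γ i)) ∧ Pairwise (Anticommute on γ) := by
  induction k with
  | zero =>
    exact ⟨1, fun _ => isUnit_one, fun i j hij => absurd (Fin.subsingleton_one.elim i j) hij⟩
  | succ k ih =>
    obtain ⟨γ, hunit, hanti⟩ := ih
    obtain ⟨δ, hδ, hδδ⟩ := exists_anticommuting_isUnit_matrix_sum hunit hanti
    let e : Fin (2 ^ k) ⊕ Fin (2 ^ k) ≃ Fin (2 ^ (k + 1)) :=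
      finSumFinEquiv.trans (finCongr (by rw [pow_succ, mul_two]))
    let f := (Matrix.reindexAlgEquiv R R e).toRingEquiv.toRingHom
    exact ⟨fun i => f (δ i), fun i => (hδ i).map f, fun i j hij => (hδδ hij).map f⟩

end GammaMatrices

/-! ### Clifford algebras -/

section Clifford

variable {R : Type*} [CommRing R] {n : ℕ}

theorem satisfiesStandardIdentity_of_anticommute {A : Type*} [Ring A] [Algebra R A]
    {ξ : Fin n → A} (hgen : Algebra.adjoin R (Set.range ξ) = ⊤)
    (hanti : Pairwise (Anticommute on ξ)) : SatisfiesStandardIdentity A (2 ^ (n / 2 + 1)) := by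
  obtain ⟨γ, hunit, hγ⟩ := exists_anticommuting_isUnit_matrix ℚ (n / 2)
  have : IsAddTorsionFree (Matrix (Fin (2 ^ (n / 2))) (Fin (2 ^ (n / 2))) ℚ) :=
    IsAddTorsionFree.of_module_rat _
  have hmatrix : SatisfiesStandardIdentity (Matrix (Fin (2 ^ (n / 2))) (Fin (2 ^ (n / 2))) ℚ)
      (2 ^ (n / 2 + 1)) := by
    simpa only [Fintype.card_fin, ← pow_succ'] using
      amitsur_levitzki (n := Fin (2 ^ (n / 2))) (R := ℚ)
  have hle : n ≤ 2 * (n / 2) + 1 := by lia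
  refine hmatrix.of_commuteUpToSign hgen (fun i => hunit (Fin.castLE hle i)) fun i j => ?_
  obtain rfl | hij := eq_or_ne i j
  · exact CommuteUpToSign.refl _
  · exact Anticommute.commuteUpToSign
      (Prod.ext (hanti hij) (hγ ((Fin.castLE_injective hle).ne hij)))

theorem cliffordAlgebra_standard_identity_general {M : Type*} [AddCommGroup M] [Module R M]
    (Q : QuadraticForm R M) {v : Fin n → M} (hspan : Submodule.span R (Set.range v) = ⊤)
    (hortho : Pairwise (Q.IsOrtho on v)) :
    SatisfiesStandardIdentity (CliffordAlgebra Q) (2 ^ (n / 2 + 1)) := by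
  refine satisfiesStandardIdentity_of_anticommute (R := R)
    (ξ := fun i => CliffordAlgebra.ι Q (v i)) ?_
    fun i j hij => CliffordAlgebra.ι_mul_ι_comm_of_isOrtho (hortho hij)
  rw [← Function.comp_def, Set.range_comp, ← Algebra.adjoin_span, Submodule.span_image, hspan,
    Submodule.map_top, LinearMap.coe_range, CliffordAlgebra.adjoin_range_ι]

theorem pairwise_isOrtho_basisFun_weightedSumSquares {ι : Type*} [Fintype ι] (w : ι → R) :
    Pairwise ((QuadraticMap.weightedSumSquares R w).IsOrtho on Pi.basisFun R ι) := by
  classical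
  intro i j hij
  rw [onFun, QuadraticMap.isOrtho_def]
  simp only [QuadraticMap.weightedSumSquares_apply, ← Finset.sum_add_distrib]
  refine Finset.sum_congr rfl fun k _ => ?_
  obtain rfl | hki := eq_or_ne k i
  · simp [hij]
  · simp [hki]

end Clifford

/-- The Clifford algebra `C` over `R = ℂ[x_1, …, x_n]` with generators `ξ_i` satisfying
`ξ_i ξ_j + ξ_j ξ_i = 2 δ_{ij} x_i` satisfies the standard polynomial identity of degree
`N = 2^{⌊n/2⌋ + 1}`:  `Σ_{σ ∈ S_N} sgn(σ) u_{σ(1)} ⋯ u_{σ(N)} = 0` for all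
`u_1, …, u_N ∈ C`.  (The Amitsur–Levitzki identity for `U(𝔥)`, `𝔥` the Cartan
subalgebra of `Q(n)`.) -/
theorem cliffordAlgebra_standard_identity (n : ℕ) (hn : 1 ≤ n)
    (u : Fin (2 ^ (n / 2 + 1)) → CliffordAlgebra (Qform n)) :
    ∑ σ : Equiv.Perm (Fin (2 ^ (n / 2 + 1))),
      (Equiv.Perm.sign σ : ℤ) • (List.ofFn (fun i => u (σ i))).prod = 0 := by
  exact cliffordAlgebra_standard_identity_general (Qform n) (Pi.basisFun _ _).span_eq
    (pairwise_isOrtho_basisFun_weightedSumSquares _) u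
end

section
/- Let A be an associative unital ℂ-algebra satisfying the standard polynomial identity of degree 2m for some integer m ≥ 1, and let M be a simple left A-module such that every A-module endomorphism of M is multiplication by a complex scalar. Then M is finite-dimensional over ℂ and dim_ℂ M ≤ m. (This is the density-theorem argument underlying the bound on dimensions of irreducible representations of algebras satisfying the Amitsur–Levitzki identity.) -/
/-!
If `M` contained `n / 2 + 1` linearly independent vectors `v 0, v 1, …`, then by density some
elements of `A` would act on them as the `n` matrix units `E₀₀, E₀₁, E₁₁, E₁₂, E₂₂, …`, whose
indices follow the walk `k ↦ k / 2`. Multiplied in this order they send the vector at the end of the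
walk to `v 0`; in any other order two adjacent indices mismatch, so the product kills every `v j`.
Hence the standard polynomial of degree `n` does not vanish on these elements.
-/

/-- The standard polynomial of degree `n`, evaluated at the tuple `u`. -/
def standardPolynomial {A : Type*} [Ring A] {n : ℕ} (u : Fin n → A) : A :=
  ∑ σ : Equiv.Perm (Fin n), (Equiv.Perm.sign σ : ℤ) • (List.ofFn fun i => u (σ i)).prod

/-- The scalar `r` acts on the family `v` as the matrix unit `E_{a b}`: it sends `v b` to `v a` and
every other member of the family to `0`. The `smul` on the left is that of the function space
`κ → M`. -/
def ActsAsMatrixUnit {κ A M : Type*} [DecidableEq κ] [Zero M] [SMul A M] (v : κ → M) (a b : κ)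
    (r : A) : Prop :=
  r • v = Pi.single b (v a)

namespace ActsAsMatrixUnit

variable {κ A M : Type*} [DecidableEq κ] [Zero M] [SMul A M] {v : κ → M} {a b : κ} {r : A}

theorem smul_eq (h : ActsAsMatrixUnit v a b r) : r • v b = v a := by
  simpa using congrFun h b

theorem smul_eq_zero_of_ne (h : ActsAsMatrixUnit v a b r) {j : κ} (hj : j ≠ b) :
    r • v j = 0 := by
  simpa [hj] using congrFun h j

theorem smul_eq_zero_or_eq (h : ActsAsMatrixUnit v a b r) (j : κ) :
    r • v j = 0 ∨ r • v j = v a := by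
  rcases eq_or_ne j b with rfl | hj
  · exact .inr h.smul_eq
  · exact .inl (h.smul_eq_zero_of_ne hj)

end ActsAsMatrixUnit

section Products

variable {ι κ A M : Type*} [DecidableEq κ] [Monoid A] [AddMonoid M] [DistribMulAction A M]
  {v : κ → M} {a b : ι → κ} {u : ι → A}

theorem prod_map_cons_smul_eq_zero_or_eq (hu : ∀ i, ActsAsMatrixUnit v (a i) (b i) (u i))
    (i : ι) (l : List ι) (j : κ) :
    ((i :: l).map u).prod • v j = 0 ∨ ((i :: l).map u).prod • v j = v (a i) := by
  induction l generalizing i with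
  | nil => simpa using (hu i).smul_eq_zero_or_eq j
  | cons k l ih =>
    rw [List.map_cons, List.prod_cons, mul_smul]
    rcases ih k with hzero | heq
    · exact .inl (by rw [hzero, smul_zero])
    · rw [heq]
      exact (hu i).smul_eq_zero_or_eq (a k)

theorem isChain_of_prod_map_smul_ne_zero (hu : ∀ i, ActsAsMatrixUnit v (a i) (b i) (u i))
    {l : List ι} {j : κ} (hl : (l.map u).prod • v j ≠ 0) :
    l.IsChain fun i k => a k = b i := by
  induction l with
  | nil => exact .nil
  | cons i l ih =>
    rw [List.map_cons, List.prod_cons, mul_smul] at hl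
    have htail : (l.map u).prod • v j ≠ 0 := fun h => hl (by rw [h, smul_zero])
    cases l with
    | nil => exact .singleton i
    | cons k l =>
      have hk := (prod_map_cons_smul_eq_zero_or_eq hu k l j).resolve_left htail
      rw [hk] at hl
      exact .cons_cons (not_imp_comm.1 (hu i).smul_eq_zero_of_ne hl) (ih htail)

end Products

theorem prod_ofFn_smul_last {A X : Type*} [Monoid A] [MulAction A X] {n : ℕ}
    {u : Fin n → A} {x : Fin (n + 1) → X} (hu : ∀ i, u i • x i.succ = x i.castSucc) :
    (List.ofFn u).prod • x (Fin.last n) = x 0 := by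
  induction n with
  | zero => simp
  | succ n ih =>
    have htail : (List.ofFn fun i => u i.succ).prod • x (Fin.last (n + 1)) = x 1 :=
      ih (x := Fin.tail x) fun i => hu i.succ
    rw [List.ofFn_succ, List.prod_cons, mul_smul, htail]
    exact hu 0

theorem standardPolynomial_smul_of_walk {κ A M : Type*} [DecidableEq κ] [Ring A] [AddCommGroup M]
    [Module A M] {n : ℕ} {p : Fin (n + 1) → κ}
    (hp : ∀ i j : Fin n, p j.castSucc = p i.succ → i ≤ j) {v : κ → M} {u : Fin n → A}
    (hu : ∀ i, ActsAsMatrixUnit v (p i.castSucc) (p i.succ) (u i)) :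
    standardPolynomial u • v (p (Fin.last n)) = v (p 0) := by
  have hvanish (σ : Equiv.Perm (Fin n)) (hσ : σ ≠ 1) :
      (List.ofFn fun i => u (σ i)).prod • v (p (Fin.last n)) = 0 := by
    rw [← Function.comp_def u σ, ← List.map_ofFn]
    by_contra hne
    have hle : (List.ofFn σ).IsChain (· ≤ ·) :=
      (isChain_of_prod_map_smul_ne_zero hu hne).imp hp
    exact hσ (σ.monotone_iff.1 (List.sortedLE_ofFn_iff.1 hle.sortedLE))
  calc standardPolynomial u • v (p (Fin.last n))
      = (List.ofFn u).prod • v (p (Fin.last n)) := by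
        rw [standardPolynomial, Finset.sum_smul, Finset.sum_eq_single 1]
        · simp
        · intro σ _ hσ
          rw [smul_assoc, hvanish σ hσ, smul_zero]
        · simp
    _ = v (p 0) := prod_ofFn_smul_last (x := v ∘ p) fun i => (hu i).smul_eq

theorem exists_linearMap_apply_eq_of_linearIndependent {K V W ι : Type*} [DivisionRing K]
    [AddCommGroup V] [Module K V] [AddCommGroup W] [Module K W]
    {v : ι → V} (hv : LinearIndependent K v) (w : ι → W) :
    ∃ g : V →ₗ[K] W, ∀ i, g (v i) = w i := by
  obtain ⟨coords, hcoords⟩ :=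
    (Finsupp.linearCombination K v).exists_leftInverse_of_injective (LinearMap.ker_eq_bot.2 hv)
  refine ⟨Finsupp.linearCombination K w ∘ₗ coords, fun i => ?_⟩
  have hsingle : coords (v i) = Finsupp.single i 1 := by
    simpa using LinearMap.congr_fun hcoords (Finsupp.single i 1)
  simp [hsingle]

theorem exists_smul_eq_of_linearIndependent {K A M ι : Type*} [DivisionRing K] [Ring A]
    [AddCommGroup M] [Module K M] [Module A M] [IsSemisimpleModule A M] [Finite ι]
    (hEnd : ∀ f : M →ₗ[A] M, ∃ c : K, ∀ x : M, f x = c • x)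
    {v : ι → M} (hv : LinearIndependent K v) (w : ι → M) :
    ∃ r : A, r • v = w := by
  obtain ⟨g, hg⟩ := exists_linearMap_apply_eq_of_linearIndependent hv w
  let gEnd : Module.End (Module.End A M) M :=
    { g with
      map_smul' := fun e x => by
        obtain ⟨c, hc⟩ := hEnd e
        simp [hc] }
  obtain ⟨r, hr⟩ := jacobson_density gEnd (Set.finite_range v).toFinset
  refine ⟨r, funext fun i => ?_⟩
  calc r • v i = g (v i) := (hr (v i) (by simp)).symm
    _ = w i := hg i

theorem simpleModule_finiteDimensional_of_standard_identity_general {K A M : Type*}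
    [DivisionRing K] [Ring A] [AddCommGroup M] [Module K M] [Module A M] [IsSemisimpleModule A M]
    (n : ℕ) (hA : ∀ u : Fin n → A, standardPolynomial u = 0)
    (hEnd : ∀ f : M →ₗ[A] M, ∃ c : K, ∀ x : M, f x = c • x) :
    Module.Finite K M ∧ Module.finrank K M ≤ n / 2 := by
  suffices hrank : Module.rank K M ≤ (n / 2 : ℕ) from
    ⟨Module.rank_lt_aleph0_iff.1 (hrank.trans_lt Cardinal.natCast_lt_aleph0),
      Module.finrank_le_of_rank_le hrank⟩
  by_contra! hlt
  obtain ⟨v, hv⟩ : ∃ v : Fin (n / 2 + 1) → M, LinearIndependent K v :=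
    Module.le_rank_iff.1 (by exact_mod_cast Order.succ_le_of_lt hlt)
  let p (k : Fin (n + 1)) : Fin (n / 2 + 1) := ⟨k / 2, by omega⟩
  have hp (i j : Fin n) (hij : p j.castSucc = p i.succ) : i ≤ j := by
    have hhalf : (j : ℕ) / 2 = (i + 1) / 2 := congrArg Fin.val hij
    omega
  choose u hu using fun i : Fin n =>
    exists_smul_eq_of_linearIndependent hEnd hv (Pi.single (p i.succ) (v (p i.castSucc)))
  have hzero : v (p 0) = 0 := by
    rw [← standardPolynomial_smul_of_walk hp hu, hA, zero_smul]
  exact hv.ne_zero (p 0) hzero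

/-- If `A` is an associative unital `ℂ`-algebra satisfying the standard polynomial
identity of degree `2m` (`m ≥ 1`), and `M` is a simple left `A`-module all of whose
`A`-module endomorphisms are multiplication by complex scalars, then `M` is
finite-dimensional over `ℂ` of dimension at most `m`. -/
theorem simpleModule_finiteDimensional_of_standard_identity
    (A : Type*) [Ring A] [Algebra ℂ A] (m : ℕ) (hm : 1 ≤ m)
    (hA : ∀ u : Fin (2 * m) → A,
      ∑ σ : Equiv.Perm (Fin (2 * m)),
        (Equiv.Perm.sign σ : ℤ) • (List.ofFn (fun i => u (σ i))).prod = 0)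
    (M : Type*) [AddCommGroup M] [Module ℂ M] [Module A M] [IsScalarTower ℂ A M]
    [IsSimpleModule A M]
    (hEnd : ∀ f : M →ₗ[A] M, ∃ c : ℂ, ∀ x : M, f x = c • x) :
    FiniteDimensional ℂ M ∧ Module.finrank ℂ M ≤ m := by
  simpa using simpleModule_finiteDimensional_of_standard_identity_general (2 * m) hA hEnd
end

section
/- In the Clifford algebra C (case n = 2), let 𝒜 be the unital ℂ-subalgebra generated by the four elements z_0 = 2x_1 + 2x_2, φ_0 = ξ_1 + ξ_2, φ_1 = x_2·ξ_1 − x_1·ξ_2, and z_1 = x_1x_2 − ξ_1ξ_2. Then the set of polynomials p ∈ ℂ[x_1, x_2] whose image in C lies in 𝒜 is exactly ℂ ⊕ z_0·ℂ[z_0, x_1x_2], i.e. the ℂ-span of the constants together with all elements of the form (x_1 + x_2)·q(x_1 + x_2, x_1x_2) with q a polynomial in two variables. Equivalently, it consists of all symmetric polynomials p in x_1, x_2 such that ∂p/∂x_1 − ∂p/∂x_2 is divisible by x_1 + x_2. (This is the case n = 2 of the identification of the even polynomial part of the image of the Harish-Chandra homomorphism of the principal finite W-algebra of Q(n) with the image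 of the center of U(Q(n)).) -/
open MvPolynomial

/-- `R = ℂ[x_1, x_2]`. -/
noncomputable abbrev Rpoly : Type := MvPolynomial (Fin 2) ℂ

/-- The quadratic form `Q(v) = x_1 v_1² + x_2 v_2²` on `R²`. -/
noncomputable def Q2 : QuadraticForm Rpoly (Fin 2 → Rpoly) :=
  QuadraticMap.weightedSumSquares Rpoly (fun i => (X i : Rpoly))

/-- The generators `ξ_1, ξ_2` of the Clifford algebra `C`, satisfying
`ξ_i ξ_j + ξ_j ξ_i = 2 δ_{ij} x_i`. -/
noncomputable def ξ (i : Fin 2) : CliffordAlgebra Q2 :=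
  CliffordAlgebra.ι Q2 (Pi.single i 1)

/-- `z_0 = 2x_1 + 2x_2`. -/
noncomputable def z₀ : CliffordAlgebra Q2 :=
  algebraMap Rpoly _ (2 * X 0 + 2 * X 1)

/-- `φ_0 = ξ_1 + ξ_2`. -/
noncomputable def φ₀ : CliffordAlgebra Q2 := ξ 0 + ξ 1

/-- `φ_1 = x_2 ξ_1 - x_1 ξ_2`. -/
noncomputable def φ₁ : CliffordAlgebra Q2 :=
  algebraMap Rpoly _ (X 1) * ξ 0 - algebraMap Rpoly _ (X 0) * ξ 1

/-- `z_1 = x_1 x_2 - ξ_1 ξ_2`. -/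
noncomputable def z₁ : CliffordAlgebra Q2 :=
  algebraMap Rpoly _ (X 0 * X 1) - ξ 0 * ξ 1

/-!
Write `s = x₁ + x₂`, `t = x₁x₂` and `w = ξ₁ξ₂`, so that `φ₀² = s`, `φ₁φ₀ = sw`, `z₁ = t - w` and
`w² = -t`.

*Symmetry.* Let `τ` be the ring automorphism of `C` exchanging the two indices. Then
`φ₀ a = τ(a) φ₀` for each generator `a` of `𝒜`, hence for all `a ∈ 𝒜`; for a polynomial `p ∈ 𝒜` this
gives `(p - τ(p)) s = 0`.

*Divisibility.* Over the line `x₁ = x = -x₂` the algebra `C` acts by `2 × 2` matrices in such a way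
that `𝒜` becomes lower triangular. The generators `z₀, φ₀, φ₁` have zero diagonal and `z₁` has
diagonal `(-x² - x, -x² + x)`, whose second entry turns into the first under `x ↦ x + 1`. So the
restriction of a polynomial `p ∈ 𝒜` to the line is invariant under this shift, i.e. constant, and
its derivative is the restriction of `∂p/∂x₁ - ∂p/∂x₂`.

*Converse.* Such a `p` has the form `c + g s` with `g` symmetric. The polynomials `q` with
`q, qw ∈ 𝒜` include `s` and are stable under multiplication by `s` and by `t`, because
`q z₁ = qt - qw` and `qw z₁ = qwt + qt`. So `g s ∈ 𝒜`.
-/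

namespace SergeevClifford

section CliffordAlgebra

theorem sum_mul_sum_self_of_anticommute {ι A : Type*} [NonUnitalNonAssocRing A] (s : Finset ι)
    (b : ι → A) (hb : Pairwise fun i j => b i * b j = -(b j * b i)) :
    (∑ i ∈ s, b i) * ∑ i ∈ s, b i = ∑ i ∈ s, b i * b i := by
  classical
  induction s using Finset.induction_on with
  | empty => simp
  | insert i s hi ih =>
    have hcross : b i * ∑ j ∈ s, b j = -((∑ j ∈ s, b j) * b i) := by
      rw [Finset.mul_sum, Finset.sum_mul, ← Finset.sum_neg_distrib]
      exact Finset.sum_congr rfl fun j hj => hb (ne_of_mem_of_not_mem hj hi).symm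
    rw [Finset.sum_insert hi, Finset.sum_insert hi, mul_add, add_mul, add_mul, ih, hcross]
    abel

theorem algebraMap_cliffordAlgebra_injective {R M : Type*} [CommRing R] [AddCommGroup M]
    [Module R M] [Invertible (2 : R)] (Q : QuadraticForm R M) :
    Function.Injective (algebraMap R (CliffordAlgebra Q)) := fun x y h => by
  simpa using congr_arg (CliffordAlgebra.equivExterior Q) h

variable {k R S A ι : Type*} [CommRing k] [CommRing R] [Algebra k R] [CommRing S] [Algebra k S]
  [Ring A] [Algebra k A] [Algebra S A] [IsScalarTower k S A] [Fintype ι] [DecidableEq ι]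

theorem exists_algHom_weightedSumSquares (σ : R →ₐ[k] S) (w : ι → R) (a : ι → A)
    (hsq : ∀ i, a i * a i = algebraMap S A (σ (w i)))
    (hanti : Pairwise fun i j => a i * a j = -(a j * a i)) :
    ∃ ρ : CliffordAlgebra (QuadraticMap.weightedSumSquares R w) →ₐ[k] A,
      (∀ r, ρ (algebraMap R _ r) = algebraMap S A (σ r)) ∧
        ∀ i, ρ (CliffordAlgebra.ι _ (Pi.single i 1)) = a i := by
  let _ : Algebra R A := Algebra.compHom A (σ : R →+* S)
  have hmap (r : R) : algebraMap R A r = algebraMap S A (σ r) := rfl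
  have : IsScalarTower k R A := IsScalarTower.of_algebraMap_eq fun c => by
    rw [hmap, AlgHom.commutes, ← IsScalarTower.algebraMap_apply]
  have hsquare (m : ι → R) : Fintype.linearCombination R a m * Fintype.linearCombination R a m =
      algebraMap R A (QuadraticMap.weightedSumSquares R w m) := by
    have hanti' : Pairwise fun i j => m i • a i * m j • a j = -(m j • a j * m i • a i) := by
      intro i j hij
      rw [smul_mul_smul_comm, smul_mul_smul_comm, hanti hij, smul_neg, mul_comm (m i)]
    rw [Fintype.linearCombination_apply, sum_mul_sum_self_of_anticommute _ _ hanti',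
      QuadraticMap.weightedSumSquares_apply, map_sum]
    refine Finset.sum_congr rfl fun i _ => ?_
    rw [smul_mul_smul_comm, hsq, ← hmap, Algebra.smul_def, ← map_mul, smul_eq_mul, mul_comm]
  let ρ := CliffordAlgebra.lift (QuadraticMap.weightedSumSquares R w)
    ⟨Fintype.linearCombination R a, hsquare⟩
  refine ⟨ρ.restrictScalars k, fun r => ρ.commutes r, fun i => ?_⟩
  simp [ρ]

end CliffordAlgebra

section Polynomial

variable {k : Type*}

theorem eq_C_of_taylor_eq_self [CommRing k] [IsDomain k] [CharZero k] {r : k} (hr : r ≠ 0)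
    {f : Polynomial k} (hf : Polynomial.taylor r f = f) : f = Polynomial.C (f.eval 0) := by
  have heval (n : ℕ) : f.eval (n * r) = f.eval 0 := by
    induction n with
    | zero => simp
    | succ n ih => rw [Nat.cast_succ, add_one_mul, ← Polynomial.taylor_eval, hf, ih]
  have hinj : Function.Injective fun n : ℕ => (n : k) * r :=
    (mul_left_injective₀ hr).comp Nat.cast_injective
  refine Polynomial.eq_of_infinite_eval_eq _ _ ((Set.infinite_range_of_injective hinj).mono ?_)
  rintro _ ⟨n, rfl⟩
  simpa using heval n

theorem derivative_aeval_eq_sum [CommSemiring k] {σ : Type*} [Fintype σ] (f : σ → Polynomial k)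
    (p : MvPolynomial σ k) :
    Polynomial.derivative (aeval f p) =
      ∑ i, aeval f (pderiv i p) * Polynomial.derivative (f i) := by
  classical
  induction p using MvPolynomial.induction_on with
  | C c => simp
  | add p q hp hq => simp [hp, hq, add_mul, Finset.sum_add_distrib]
  | mul_X p j hp =>
    have hj : ∑ i, aeval f (p * pderiv i (X j)) * Polynomial.derivative (f i) =
        aeval f p * Polynomial.derivative (f j) := by
      simp [pderiv_X, Pi.single_apply, apply_ite (aeval f)]
    simp only [map_mul, aeval_X, Polynomial.derivative_mul, hp, Derivation.leibniz, smul_eq_mul,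
      map_add, add_mul, Finset.sum_add_distrib, Finset.sum_mul] at hj ⊢
    rw [hj, add_comm]
    simp only [mul_comm _ (f j), mul_assoc]

theorem isSymmetric_fin_two_iff [CommSemiring k] {p : MvPolynomial (Fin 2) k} :
    p.IsSymmetric ↔ rename (Equiv.swap 0 1) p = p := by
  refine ⟨fun hp => hp _, fun hp e => ?_⟩
  obtain rfl | rfl : e = 1 ∨ e = Equiv.swap 0 1 := by decide +revert
  · simp
  · exact hp

theorem isSymmetric_of_mul_left [CommRing k] [IsDomain k] {σ : Type*} {p q : MvPolynomial σ k}
    (hp : p.IsSymmetric) (hp₀ : p ≠ 0) (hpq : (p * q).IsSymmetric) : q.IsSymmetric := fun e =>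
  mul_left_cancel₀ hp₀ <| by simpa only [map_mul, hp e] using hpq e

theorem mem_adjoin_of_isSymmetric_fin_two [CommRing k] {p : MvPolynomial (Fin 2) k}
    (hp : p.IsSymmetric) : p ∈ Algebra.adjoin k {X 0 + X 1, X 0 * X 1} := by
  obtain ⟨g, hg⟩ := esymmAlgHom_surjective (R := k) (n := 2) (Fintype.card_fin 2).le ⟨p, hp⟩
  have hesymm : (fun i : Fin 2 => esymm (Fin 2) k (i + 1)) = ![X 0 + X 1, X 0 * X 1] := by
    ext1 i
    fin_cases i
    · simp
    · rw [esymm_eq_multiset_esymm]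
      exact Multiset.esymm_pair_two (X 0 : MvPolynomial (Fin 2) k) (X 1)
  have haeval : aeval ![X 0 + X 1, X 0 * X 1] g = p := by
    rw [← hesymm, ← esymmAlgHom_apply, hg]
  rw [← haeval, ← Matrix.range_cons_cons_empty _ _ ![], Algebra.adjoin_range_eq_range_aeval]
  exact ⟨g, rfl⟩

/-- Restriction of a polynomial to the line `x₁ + x₂ = 0`, with `x₁` as the coordinate. -/
noncomputable def restrictAntidiagonal (k : Type*) [CommRing k] :
    MvPolynomial (Fin 2) k →ₐ[k] Polynomial k :=
  aeval ![Polynomial.X, -Polynomial.X]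

section CommRing

variable [CommRing k]

@[simp]
theorem restrictAntidiagonal_X_zero : restrictAntidiagonal k (X 0) = Polynomial.X := by
  simp [restrictAntidiagonal]

@[simp]
theorem restrictAntidiagonal_X_one : restrictAntidiagonal k (X 1) = -Polynomial.X := by
  simp [restrictAntidiagonal]

theorem X_add_X_dvd_sub_aeval_restrictAntidiagonal (p : MvPolynomial (Fin 2) k) :
    X 0 + X 1 ∣ p - Polynomial.aeval (X 0) (restrictAntidiagonal k p) := by
  let I : Ideal (MvPolynomial (Fin 2) k) := Ideal.span {X 0 + X 1}
  have hmk : Ideal.Quotient.mkₐ k I =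
      (Ideal.Quotient.mkₐ k I).comp
        ((Polynomial.aeval (X 0)).comp (restrictAntidiagonal k)) := by
    ext i
    fin_cases i
    · simp
    · have hzero : Ideal.Quotient.mk I (X 0) + Ideal.Quotient.mk I (X 1) = 0 := by
        rw [← map_add, Ideal.Quotient.eq_zero_iff_mem]
        exact Ideal.mem_span_singleton_self _
      simpa using eq_neg_of_add_eq_zero_right hzero
  rw [← Ideal.mem_span_singleton, ← Ideal.Quotient.mk_eq_mk_iff_sub_mem]
  exact DFunLike.congr_fun hmk p

theorem X_add_X_dvd_iff {p : MvPolynomial (Fin 2) k} :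
    X 0 + X 1 ∣ p ↔ restrictAntidiagonal k p = 0 := by
  constructor
  · rintro ⟨q, rfl⟩
    simp
  · intro h
    simpa [h] using X_add_X_dvd_sub_aeval_restrictAntidiagonal p

theorem derivative_restrictAntidiagonal (p : MvPolynomial (Fin 2) k) :
    Polynomial.derivative (restrictAntidiagonal k p) =
      restrictAntidiagonal k (pderiv 0 p - pderiv 1 p) := by
  simp [restrictAntidiagonal, derivative_aeval_eq_sum, ← sub_eq_add_neg]

theorem X_add_X_dvd_pderiv_sub_pderiv_iff [IsDomain k] [CharZero k]
    {p : MvPolynomial (Fin 2) k} :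
    X 0 + X 1 ∣ pderiv 0 p - pderiv 1 p ↔
      ∃ c, restrictAntidiagonal k p = Polynomial.C c := by
  rw [X_add_X_dvd_iff, ← derivative_restrictAntidiagonal]
  constructor
  · exact fun h => ⟨_, Polynomial.eq_C_of_derivative_eq_zero h⟩
  · rintro ⟨c, hc⟩
    simp [hc]

theorem X_add_X_ne_zero [Nontrivial k] : (X 0 + X 1 : MvPolynomial (Fin 2) k) ≠ 0 :=
  fun h => by simpa using congr_arg (eval ![1, 0]) h

theorem exists_isSymmetric_eq_C_add_mul [IsDomain k] {p : MvPolynomial (Fin 2) k}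
    (hp : p.IsSymmetric) {c : k} (hc : restrictAntidiagonal k p = Polynomial.C c) :
    ∃ g : MvPolynomial (Fin 2) k, g.IsSymmetric ∧ p = C c + g * (X 0 + X 1) := by
  obtain ⟨g, hg⟩ : X 0 + X 1 ∣ p - C c := X_add_X_dvd_iff.2 <| by
    simp [hc, Polynomial.algebraMap_eq]
  have hs : (X 0 + X 1 : MvPolynomial (Fin 2) k).IsSymmetric :=
    isSymmetric_fin_two_iff.2 <| by simp [add_comm]
  have hg_symm : g.IsSymmetric :=
    isSymmetric_of_mul_left hs X_add_X_ne_zero (hg ▸ hp.sub (.C c))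
  exact ⟨g, hg_symm, by rw [mul_comm, ← hg, add_sub_cancel]⟩

end CommRing

end Polynomial

/-- The algebra `𝒜` generated by `z₀, φ₀, φ₁, z₁`, i.e. the image of the principal finite
`W`-algebra of `Q(2)` under the Harish-Chandra homomorphism. -/
noncomputable abbrev harishChandraImage : Subalgebra ℂ (CliffordAlgebra Q2) :=
  Algebra.adjoin ℂ {z₀, φ₀, φ₁, z₁}

/-- The element `w = ξ₁ξ₂`, which generates the even part of `C` over `R`. -/
noncomputable def volumeElement : CliffordAlgebra Q2 := ξ 0 * ξ 1

section Relations

theorem ξ_mul_self (i : Fin 2) : ξ i * ξ i = algebraMap Rpoly _ (X i) := by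
  rw [ξ, CliffordAlgebra.ι_sq_scalar]
  simp [Q2, QuadraticMap.weightedSumSquares_apply, Pi.single_apply]

theorem ξ_anticommute : Pairwise fun i j => ξ i * ξ j = -(ξ j * ξ i) := fun i j hij => by
  refine CliffordAlgebra.ι_mul_ι_comm_of_isOrtho ?_
  fin_cases i <;> fin_cases j <;>
    simp_all [Q2, QuadraticMap.isOrtho_def, QuadraticMap.weightedSumSquares_apply,
      Pi.single_apply, add_comm]

theorem volumeElement_mul_ξ (i : Fin 2) : volumeElement * ξ i = -(ξ i * volumeElement) := by
  have h : ξ 1 * ξ 0 = -(ξ 0 * ξ 1) := ξ_anticommute (by decide)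
  fin_cases i
  · simp [volumeElement, mul_assoc, h]
  · simp [volumeElement, ← mul_assoc, h]

theorem volumeElement_mul_self :
    volumeElement * volumeElement = -algebraMap Rpoly _ (X 0 * X 1) :=
  calc volumeElement * volumeElement = volumeElement * ξ 0 * ξ 1 := by
        rw [mul_assoc, ← volumeElement]
    _ = -(ξ 0 * ξ 0 * (ξ 1 * ξ 1)) := by rw [volumeElement_mul_ξ, volumeElement]; noncomm_ring
    _ = _ := by rw [ξ_mul_self, ξ_mul_self, map_mul]

theorem z₁_eq : z₁ = algebraMap Rpoly _ (X 0 * X 1) - volumeElement := rfl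

theorem volumeElement_mul_φ₀ : volumeElement * φ₀ = -(φ₀ * volumeElement) := by
  rw [φ₀, mul_add, volumeElement_mul_ξ, volumeElement_mul_ξ, add_mul, neg_add]

theorem φ₀_mul_self : φ₀ * φ₀ = algebraMap Rpoly _ (X 0 + X 1) := by
  have h : ξ 1 * ξ 0 = -(ξ 0 * ξ 1) := ξ_anticommute (by decide)
  rw [map_add, ← ξ_mul_self, ← ξ_mul_self, φ₀, mul_add, add_mul, add_mul, h]
  abel

theorem φ₁_eq : φ₁ = volumeElement * φ₀ := by
  rw [φ₀, mul_add, volumeElement_mul_ξ, volumeElement, ← mul_assoc, mul_assoc _ (ξ 1) (ξ 1),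
    ξ_mul_self, ξ_mul_self, ← Algebra.commutes, φ₁]
  abel

theorem φ₁_mul_φ₀ : φ₁ * φ₀ = algebraMap Rpoly _ (X 0 + X 1) * volumeElement := by
  rw [φ₁_eq, mul_assoc, φ₀_mul_self, Algebra.commutes]

end Relations

section Symmetry

theorem exists_swapHom : ∃ τ : CliffordAlgebra Q2 →ₐ[ℂ] CliffordAlgebra Q2,
    (∀ p, τ (algebraMap Rpoly _ p) = algebraMap Rpoly _ (rename (Equiv.swap 0 1) p)) ∧
      ∀ i, τ (ξ i) = ξ (Equiv.swap 0 1 i) :=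
  exists_algHom_weightedSumSquares (rename (Equiv.swap 0 1)) _ (fun i => ξ (Equiv.swap 0 1 i))
    (fun i => by rw [ξ_mul_self, rename_X])
    fun _ _ hij => ξ_anticommute ((Equiv.swap 0 1).injective.ne hij)

theorem φ₀_mul_eq_mul_φ₀ {τ : CliffordAlgebra Q2 →ₐ[ℂ] CliffordAlgebra Q2}
    (hτ : ∀ p, τ (algebraMap Rpoly _ p) = algebraMap Rpoly _ (rename (Equiv.swap 0 1) p))
    (hτξ : ∀ i, τ (ξ i) = ξ (Equiv.swap 0 1 i)) {a : CliffordAlgebra Q2}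
    (ha : a ∈ harishChandraImage) : φ₀ * a = τ a * φ₀ := by
  have hτw : τ volumeElement = -volumeElement := by
    simpa [volumeElement, hτξ] using ξ_anticommute (show (1 : Fin 2) ≠ 0 by decide)
  have hτφ₀ : τ φ₀ = φ₀ := by simp [φ₀, hτξ, add_comm]
  induction ha using Algebra.adjoin_induction with
  | mem a ha =>
    rcases ha with rfl | rfl | rfl | rfl
    · have hz₀ : rename (Equiv.swap 0 1) (2 * X 0 + 2 * X 1 : Rpoly) = 2 * X 0 + 2 * X 1 := by
        simp [add_comm, map_ofNat]
      rw [z₀, hτ, hz₀, ← Algebra.commutes]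
    · rw [hτφ₀]
    · rw [φ₁_eq, map_mul, hτw, hτφ₀, ← mul_assoc, neg_mul, volumeElement_mul_φ₀, neg_neg]
    · rw [z₁_eq, map_sub, hτ, hτw, mul_sub, sub_mul, neg_mul, volumeElement_mul_φ₀,
        neg_neg, ← Algebra.commutes]
      simp [mul_comm]
  | algebraMap c => rw [AlgHom.commutes, Algebra.commutes]
  | add a b _ _ ha hb => rw [map_add, mul_add, add_mul, ha, hb]
  | mul a b _ _ ha hb => rw [map_mul, ← mul_assoc, ha, mul_assoc, hb, mul_assoc]

theorem isSymmetric_of_mem_harishChandraImage {p : Rpoly}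
    (hp : algebraMap Rpoly _ p ∈ harishChandraImage) : p.IsSymmetric := by
  obtain ⟨τ, hτ, hτξ⟩ := exists_swapHom
  have hcomm := φ₀_mul_eq_mul_φ₀ hτ hτξ hp
  rw [hτ, ← Algebra.commutes] at hcomm
  have hmul : rename (Equiv.swap 0 1) p * (X 0 + X 1) = p * (X 0 + X 1) := by
    let _ : Invertible (2 : Rpoly) := (Invertible.map (algebraMap ℂ Rpoly) 2).copy 2
      (map_ofNat (algebraMap ℂ Rpoly) 2).symm
    apply algebraMap_cliffordAlgebra_injective Q2
    rw [map_mul, map_mul, ← φ₀_mul_self, ← mul_assoc, ← mul_assoc, hcomm]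
  exact isSymmetric_fin_two_iff.2 <| mul_right_cancel₀ X_add_X_ne_zero hmul

end Symmetry

section Restriction

open scoped Polynomial

theorem exists_restrictionRep :
    ∃ ρ : CliffordAlgebra Q2 →ₐ[ℂ] Matrix (Fin 2) (Fin 2) ℂ[X],
      (∀ p, ρ (algebraMap Rpoly _ p) = algebraMap ℂ[X] _ (restrictAntidiagonal ℂ p)) ∧
        ρ (ξ 0) = !![0, Polynomial.X; 1, 0] ∧ ρ (ξ 1) = !![0, -Polynomial.X; 1, 0] := by
  obtain ⟨ρ, hρ, hρξ⟩ := exists_algHom_weightedSumSquares (restrictAntidiagonal ℂ)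
    (fun i : Fin 2 => (X i : Rpoly))
    (![!![0, Polynomial.X; 1, 0], !![0, -Polynomial.X; 1, 0]] :
      Fin 2 → Matrix (Fin 2) (Fin 2) ℂ[X])
    (fun i => by
      ext1 a b
      fin_cases i <;> fin_cases a <;> fin_cases b <;> simp [Matrix.algebraMap_matrix_apply])
    (fun i j hij => by fin_cases i <;> fin_cases j <;> simp_all)
  exact ⟨ρ, hρ, hρξ 0, hρξ 1⟩

theorem restrictionRep_apply_of_mem
    {ρ : CliffordAlgebra Q2 →ₐ[ℂ] Matrix (Fin 2) (Fin 2) ℂ[X]}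
    (hρ : ∀ p, ρ (algebraMap Rpoly _ p) = algebraMap ℂ[X] _ (restrictAntidiagonal ℂ p))
    (hρ₀ : ρ (ξ 0) = !![0, Polynomial.X; 1, 0]) (hρ₁ : ρ (ξ 1) = !![0, -Polynomial.X; 1, 0])
    {a : CliffordAlgebra Q2} (ha : a ∈ harishChandraImage) :
    ρ a 0 1 = 0 ∧ Polynomial.taylor 1 (ρ a 1 1) = ρ a 0 0 := by
  have hz₁ : ρ z₁ = !![-Polynomial.X ^ 2 - Polynomial.X, 0;
      0, -Polynomial.X ^ 2 + Polynomial.X] := by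
    ext1 i j
    fin_cases i <;> fin_cases j <;>
      simp [z₁, hρ, hρ₀, hρ₁, Matrix.algebraMap_matrix_apply, Matrix.mul_apply, sq]
  induction ha using Algebra.adjoin_induction with
  | mem a ha =>
    rcases ha with rfl | rfl | rfl | rfl
    · simp [z₀, hρ]
    · simp [φ₀, hρ₀, hρ₁]
    · simp [φ₁, hρ, hρ₀, hρ₁, Matrix.algebraMap_matrix_apply, Matrix.mul_apply]
    · have htaylor : (-(Polynomial.X + 1) ^ 2 + (Polynomial.X + 1) : ℂ[X]) =
          -Polynomial.X ^ 2 - Polynomial.X := by ring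
      simpa [hz₁] using htaylor
  | algebraMap c => simp [AlgHom.commutes, Matrix.algebraMap_matrix_apply]
  | add a b _ _ ha hb => simp [ha, hb]
  | mul a b _ _ ha hb => simp [Matrix.mul_apply, ha, hb, Polynomial.taylor_mul]

theorem taylor_restrictAntidiagonal_of_mem {p : Rpoly}
    (hp : algebraMap Rpoly _ p ∈ harishChandraImage) :
    Polynomial.taylor 1 (restrictAntidiagonal ℂ p) = restrictAntidiagonal ℂ p := by
  obtain ⟨ρ, hρ, hρ₀, hρ₁⟩ := exists_restrictionRep
  simpa [hρ, Matrix.algebraMap_matrix_apply] using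
    (restrictionRep_apply_of_mem hρ hρ₀ hρ₁ hp).2

end Restriction

section Converse

/-- The conductor of `ℂ[w]` into `𝒜`, where `w = ξ₁ξ₂`: the polynomials `q` with `q, q w ∈ 𝒜`.
Unlike the polynomials in `𝒜`, these are stable under multiplication by `x₁x₂`. -/
noncomputable def evenConductor : Submodule ℂ Rpoly :=
  let incl := (IsScalarTower.toAlgHom ℂ Rpoly (CliffordAlgebra Q2)).toLinearMap
  (Subalgebra.toSubmodule harishChandraImage).comap incl ⊓
    (Subalgebra.toSubmodule harishChandraImage).comap
      (LinearMap.mulRight ℂ volumeElement ∘ₗ incl)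

theorem mem_evenConductor {q : Rpoly} :
    q ∈ evenConductor ↔ algebraMap Rpoly _ q ∈ harishChandraImage ∧
      algebraMap Rpoly _ q * volumeElement ∈ harishChandraImage :=
  Iff.rfl

theorem X_add_X_mem_evenConductor : X 0 + X 1 ∈ evenConductor := by
  have hφ₀ : φ₀ ∈ harishChandraImage := Algebra.subset_adjoin (by simp)
  have hφ₁ : φ₁ ∈ harishChandraImage := Algebra.subset_adjoin (by simp)
  rw [mem_evenConductor, ← φ₁_mul_φ₀, ← φ₀_mul_self]
  exact ⟨mul_mem hφ₀ hφ₀, mul_mem hφ₁ hφ₀⟩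

theorem X_add_X_mul_mem_evenConductor {q : Rpoly} (hq : q ∈ evenConductor) :
    (X 0 + X 1) * q ∈ evenConductor := by
  have hs := (mem_evenConductor.1 X_add_X_mem_evenConductor).1
  rw [mem_evenConductor, map_mul, mul_assoc]
  exact ⟨mul_mem hs hq.1, mul_mem hs hq.2⟩

theorem X_mul_X_mul_mem_evenConductor {q : Rpoly} (hq : q ∈ evenConductor) :
    X 0 * X 1 * q ∈ evenConductor := by
  obtain ⟨hq, hqw⟩ := mem_evenConductor.1 hq
  have hz₁ : z₁ ∈ harishChandraImage := Algebra.subset_adjoin (by simp)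
  have htq : algebraMap Rpoly _ (X 0 * X 1 * q) =
      algebraMap Rpoly _ q * z₁ + algebraMap Rpoly _ q * volumeElement := by
    rw [z₁_eq, mul_sub, sub_add_cancel, mul_comm, map_mul]
  have htqw : algebraMap Rpoly _ (X 0 * X 1 * q) * volumeElement =
      algebraMap Rpoly _ q * volumeElement * z₁ - algebraMap Rpoly _ (X 0 * X 1 * q) := by
    rw [z₁_eq, mul_sub, mul_assoc _ volumeElement volumeElement, volumeElement_mul_self, mul_neg,
      ← map_mul, mul_comm q, sub_neg_eq_add, add_sub_cancel_right, ← Algebra.commutes, map_mul,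
      mul_assoc]
  have ht := htq ▸ add_mem (mul_mem hq hz₁) hqw
  exact mem_evenConductor.2 ⟨ht, htqw ▸ sub_mem (mul_mem hqw hz₁) ht⟩

theorem mul_mem_evenConductor_of_isSymmetric {p q : Rpoly} (hp : p.IsSymmetric)
    (hq : q ∈ evenConductor) : p * q ∈ evenConductor := by
  have hadjoin := mem_adjoin_of_isSymmetric_fin_two hp
  clear hp
  induction hadjoin using Algebra.adjoin_induction generalizing q with
  | mem p hp =>
    rcases hp with rfl | rfl
    · exact X_add_X_mul_mem_evenConductor hq
    · exact X_mul_X_mul_mem_evenConductor hq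
  | algebraMap c => exact Algebra.smul_def c q ▸ evenConductor.smul_mem c hq
  | add p p' _ _ hp hp' => exact add_mul p p' q ▸ add_mem (hp hq) (hp' hq)
  | mul p p' _ _ hp hp' => exact (mul_assoc p p' q).symm ▸ hp (hp' hq)

theorem C_add_mul_X_add_X_mem_harishChandraImage {g : Rpoly} (hg : g.IsSymmetric) (c : ℂ) :
    algebraMap Rpoly _ (C c + g * (X 0 + X 1)) ∈ harishChandraImage := by
  have hc : algebraMap Rpoly (CliffordAlgebra Q2) (C c) ∈ harishChandraImage := by
    rw [← MvPolynomial.algebraMap_eq, ← IsScalarTower.algebraMap_apply]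
    exact Subalgebra.algebraMap_mem _ c
  rw [map_add]
  exact add_mem hc (mul_mem_evenConductor_of_isSymmetric hg X_add_X_mem_evenConductor).1

end Converse

end SergeevClifford

/-- Let `𝒜` be the unital `ℂ`-subalgebra of the Clifford algebra `C` generated by
`z_0, φ_0, φ_1, z_1`.  A polynomial `p ∈ ℂ[x_1, x_2]` has image in `𝒜` if and only if
`p` is symmetric and `∂p/∂x_1 − ∂p/∂x_2` is divisible by `x_1 + x_2`
(equivalently, `p ∈ ℂ ⊕ z_0·ℂ[z_0, x_1x_2]`). -/
theorem polynomial_mem_adjoin_iff (p : Rpoly) :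
    algebraMap Rpoly (CliffordAlgebra Q2) p ∈
        Algebra.adjoin ℂ ({z₀, φ₀, φ₁, z₁} : Set (CliffordAlgebra Q2)) ↔
      (rename (Equiv.swap (0 : Fin 2) 1) p = p ∧
        (X 0 + X 1 : Rpoly) ∣ (pderiv 0 p - pderiv 1 p)) := by
  rw [← SergeevClifford.isSymmetric_fin_two_iff,
    SergeevClifford.X_add_X_dvd_pderiv_sub_pderiv_iff]
  constructor
  · intro hp
    have hshift := SergeevClifford.taylor_restrictAntidiagonal_of_mem hp
    exact ⟨SergeevClifford.isSymmetric_of_mem_harishChandraImage hp, _,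
      SergeevClifford.eq_C_of_taylor_eq_self one_ne_zero hshift⟩
  · rintro ⟨hsymm, c, hc⟩
    obtain ⟨g, hg, rfl⟩ := SergeevClifford.exists_isSymmetric_eq_C_add_mul hsymm hc
    exact SergeevClifford.C_add_mul_X_add_X_mem_harishChandraImage hg c
end
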